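/- arXiv:1909.05758 — 10 statements merged into one kernel-verified Lean document; each statement's English description precedes it below -/
import Mathlib

section
/- Let ρ be a positive semidefinite matrix, σ a positive definite matrix of the same size, and t > 0 a real number with ρ ≤ t·σ. Then tr(ρ σ⁻¹ ρ) ≤ t · tr ρ. In particular, for a density matrix ρ this yields D̂_2(ρ‖σ) = log tr(ρ σ⁻¹ ρ) ≤ D_max(ρ‖σ). -/
open Matrix Kronecker ComplexOrder

/-- The Loewner order: `A ≤ B` iff `B - A` is positive semidefinite. -/
def Loewner {n : Type*} [Fintype n] (A B : Matrix n n ℂ) : Prop := (B - A).PosSemidef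

/-- Real matrix power via the spectral decomposition, with the convention `0 ^ β = 0`
(so negative powers are Moore–Penrose pseudo-inverses on the support); defined to be `0`
on non-Hermitian matrices. -/
noncomputable def mpow {n : Type*} [Fintype n] [DecidableEq n] (A : Matrix n n ℂ) (β : ℝ) :
    Matrix n n ℂ :=
  if hA : A.IsHermitian then
    (hA.eigenvectorUnitary : Matrix n n ℂ) *
      Matrix.diagonal (fun i =>
        (Complex.ofReal (if hA.eigenvalues i = 0 then 0 else (hA.eigenvalues i) ^ β))) *
      (star (hA.eigenvectorUnitary : Matrix n n ℂ))
  else 0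

/-- Matrix logarithm via the spectral decomposition (with `Real.log 0 = 0` on the kernel);
defined to be `0` on non-Hermitian matrices. -/
noncomputable def mlog {n : Type*} [Fintype n] [DecidableEq n] (A : Matrix n n ℂ) :
    Matrix n n ℂ :=
  if hA : A.IsHermitian then
    (hA.eigenvectorUnitary : Matrix n n ℂ) *
      Matrix.diagonal (fun i => (Complex.ofReal (Real.log (hA.eigenvalues i)))) *
      (star (hA.eigenvectorUnitary : Matrix n n ℂ))
  else 0

/-- Weighted matrix geometric mean `G_β(X,Y) = X^{1/2} (X^{-1/2} Y X^{-1/2})^β X^{1/2}`. -/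
noncomputable def geomMean {n : Type*} [Fintype n] [DecidableEq n] (β : ℝ)
    (X Y : Matrix n n ℂ) : Matrix n n ℂ :=
  mpow X (1/2) * mpow (mpow X (-(1/2)) * Y * mpow X (-(1/2))) β * mpow X (1/2)

/-- Operator relative entropy `D_op(X,Y) = X^{1/2} log(X^{1/2} Y⁻¹ X^{1/2}) X^{1/2}`. -/
noncomputable def Dop {n : Type*} [Fintype n] [DecidableEq n] (X Y : Matrix n n ℂ) :
    Matrix n n ℂ :=
  mpow X (1/2) * mlog (mpow X (1/2) * Y⁻¹ * mpow X (1/2)) * mpow X (1/2)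

/-- Geometric Rényi divergence `D̂_α(ρ‖σ) = (α-1)⁻¹ log tr G_{1-α}(ρ,σ)`. -/
noncomputable def Dhat {n : Type*} [Fintype n] [DecidableEq n] (α : ℝ)
    (ρ σ : Matrix n n ℂ) : ℝ :=
  (α - 1)⁻¹ * Real.log ((geomMean (1 - α) ρ σ).trace.re)

/-- Max-relative entropy `D_max(ρ‖σ) = log inf {t : ρ ≤ t σ}`. -/
noncomputable def Dmax {n : Type*} [Fintype n] (ρ σ : Matrix n n ℂ) : ℝ :=
  Real.log (sInf {t : ℝ | Loewner ρ (t • σ)})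

/-- Umegaki relative entropy `D(ρ‖σ) = tr[ρ (log ρ - log σ)]`. -/
noncomputable def Dum {n : Type*} [Fintype n] [DecidableEq n] (ρ σ : Matrix n n ℂ) : ℝ :=
  ((ρ * (mlog ρ - mlog σ)).trace).re

/-- Sandwiched Rényi divergence. -/
noncomputable def Dsand {n : Type*} [Fintype n] [DecidableEq n] (α : ℝ)
    (ρ σ : Matrix n n ℂ) : ℝ :=
  (α - 1)⁻¹ *
    Real.log ((mpow (mpow σ ((1 - α)/(2*α)) * ρ * mpow σ ((1 - α)/(2*α))) α).trace.re)

/-- Petz Rényi divergence. -/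
noncomputable def Dpetz {n : Type*} [Fintype n] [DecidableEq n] (α : ℝ)
    (ρ σ : Matrix n n ℂ) : ℝ :=
  (α - 1)⁻¹ * Real.log ((mpow ρ α * mpow σ (1 - α)).trace.re)

/-- Partial trace over the second tensor factor. -/
noncomputable def ptrB {A B : Type*} [Fintype B] (M : Matrix (A × B) (A × B) ℂ) :
    Matrix A A ℂ :=
  Matrix.of fun a a' => ∑ b, M (a, b) (a', b)

/-- Partial transpose on the second tensor factor. -/
def ptB {A B : Type*} (M : Matrix (A × B) (A × B) ℂ) : Matrix (A × B) (A × B) ℂ :=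
  Matrix.of fun x y => M (x.1, y.2) (y.1, x.2)

/-- Largest eigenvalue of a Hermitian matrix (`0` on non-Hermitian matrices). -/
noncomputable def lamMax {n : Type*} [Fintype n] [DecidableEq n] (M : Matrix n n ℂ) : ℝ :=
  if hM : M.IsHermitian then ⨆ i, hM.eigenvalues i else 0

/-- The action `Λ_J(ρ)` on the `A`-subsystem of the CP map with Choi matrix `J`. -/
noncomputable def chanApply {R A B : Type*} [Fintype A] (J : Matrix (A × B) (A × B) ℂ)
    (ρ : Matrix (R × A) (R × A) ℂ) : Matrix (R × B) (R × B) ℂ :=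
  Matrix.of fun x y => ∑ a, ∑ a', ρ (x.1, a) (y.1, a') * J (a, x.2) (a', y.2)

/-- Cone of separable operators: finite sums of Kronecker products of PSD matrices. -/
def SEPcone (A B : Type*) [Fintype A] [Fintype B] : Set (Matrix (A × B) (A × B) ℂ) :=
  { M | ∃ (k : ℕ) (P : Fin k → Matrix A A ℂ) (Q : Fin k → Matrix B B ℂ),
      (∀ i, (P i).PosSemidef) ∧ (∀ i, (Q i).PosSemidef) ∧ M = ∑ i, (P i) ⊗ₖ (Q i) }

/-- Trace norm `‖X‖₁ = tr √(X* X)`. -/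
noncomputable def traceNorm {n : Type*} [Fintype n] [DecidableEq n] (X : Matrix n n ℂ) : ℝ :=
  ((mpow (Xᴴ * X) (1/2)).trace).re

/-- Moore–Penrose pseudo-inverse of a PSD matrix. -/
noncomputable def mpinv {n : Type*} [Fintype n] [DecidableEq n] (M : Matrix n n ℂ) :
    Matrix n n ℂ :=
  mpow M (-1)

/-- Link product of Choi matrices (Choi matrix of the composed map). -/
noncomputable def linkProd {A B C : Type*} [Fintype B] (J₁ : Matrix (A × B) (A × B) ℂ)
    (J₂ : Matrix (B × C) (B × C) ℂ) : Matrix (A × C) (A × C) ℂ :=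
  Matrix.of fun x y => ∑ b, ∑ b', J₁ (x.1, b) (y.1, b') * J₂ (b, x.2) (b', y.2)

theorem aux_ineq {n : Type*} [Fintype n] [DecidableEq n]
    (ρ σ : Matrix n n ℂ) (hρ : ρ.PosSemidef) (hσ : σ.PosDef)
    (t : ℝ) (ht : 0 < t) (hle : Loewner ρ (t • σ)) :
    ((ρ * σ⁻¹ * ρ).trace).re ≤ t * ρ.trace.re := by
  have hu : IsUnit σ.det := (Matrix.isUnit_iff_isUnit_det σ).1 hσ.isUnit
  have hρH : ρᴴ = ρ := hρ.1
  have hσH : (σ⁻¹)ᴴ = σ⁻¹ := hσ.inv.1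
  have h1 := hρ.conjTranspose_mul_mul_same (1 - t⁻¹ • (σ⁻¹ * ρ))
  have h2 := PosSemidef.conjTranspose_mul_mul_same hle (t⁻¹ • (σ⁻¹ * ρ))
  have h3 := h1.add h2
  have e : (1 - t⁻¹ • (σ⁻¹ * ρ))ᴴ * ρ * (1 - t⁻¹ • (σ⁻¹ * ρ)) +
      (t⁻¹ • (σ⁻¹ * ρ))ᴴ * (t • σ - ρ) * (t⁻¹ • (σ⁻¹ * ρ)) = ρ - t⁻¹ • (ρ * σ⁻¹ * ρ) := by
    have k : σ * (σ⁻¹ * ρ) = ρ := Matrix.mul_nonsing_inv_cancel_left σ ρ hu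
    simp only [conjTranspose_sub, conjTranspose_one, conjTranspose_smul, conjTranspose_mul,
      hρH, hσH, star_trivial, sub_mul, mul_sub, one_mul, mul_one, smul_mul_assoc,
      mul_smul_comm, Matrix.mul_assoc, k, smul_smul, smul_sub,
      mul_inv_cancel₀ ht.ne', one_smul]
    abel
  rw [e] at h3
  have h4 := (Complex.le_def.1 h3.trace_nonneg).1
  simp only [trace_sub, trace_smul, Complex.sub_re, Complex.zero_re, Complex.real_smul,
    Complex.re_ofReal_mul] at h4
  have h5 := mul_nonneg ht.le h4
  rw [mul_sub, mul_inv_cancel_left₀ ht.ne'] at h5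
  linarith

/-- if `ρ ≤ t·σ` with `ρ` PSD, `σ` positive definite, `t > 0`, then
`tr(ρ σ⁻¹ ρ) ≤ t · tr ρ`; in particular for a density matrix `ρ`,
`D̂₂(ρ‖σ) = log tr(ρ σ⁻¹ ρ) ≤ D_max(ρ‖σ)`. -/
theorem geom_two_le_dmax {n : Type*} [Fintype n] [DecidableEq n]
    (ρ σ : Matrix n n ℂ) (hρ : ρ.PosSemidef) (hσ : σ.PosDef)
    (t : ℝ) (ht : 0 < t) (hle : Loewner ρ (t • σ)) :
    ((ρ * σ⁻¹ * ρ).trace).re ≤ t * ρ.trace.re ∧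
      (ρ.trace = 1 → Real.log (((ρ * σ⁻¹ * ρ).trace).re) ≤ Dmax ρ σ) := by
  refine ⟨aux_ineq ρ σ hρ hσ t ht hle, fun h1 => ?_⟩
  have hρH : ρᴴ = ρ := hρ.1
  have hps : (ρ * σ⁻¹ * ρ).PosSemidef := by
    have := hσ.inv.posSemidef.conjTranspose_mul_mul_same ρ
    rwa [hρH] at this
  have hne : (ρ * σ⁻¹ * ρ).trace ≠ 0 := by
    intro h0
    have hz := hps.trace_eq_zero_iff.1 h0
    have hρ0 : ρ = 0 := by
      refine Matrix.ext_of_mulVec_single fun i => ?_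
      rw [Matrix.zero_mulVec]
      by_contra hx
      have hp := hσ.inv.dotProduct_mulVec_pos hx
      rw [star_mulVec, hρH, ← dotProduct_mulVec, mulVec_mulVec, mulVec_mulVec,
        hz] at hp
      simp at hp
    rw [hρ0] at h1
    simp at h1
  have hnn := Complex.le_def.1 hps.trace_nonneg
  have hpos : 0 < (ρ * σ⁻¹ * ρ).trace.re := by
    refine lt_of_le_of_ne hnn.1 fun h => hne ?_
    exact Complex.ext h.symm hnn.2.symm
  refine Real.log_le_log hpos (le_csInf ⟨t, hle⟩ fun s hs => ?_)
  have hs' : Loewner ρ (s • σ) := hs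
  have h4 := (Complex.le_def.1 (PosSemidef.trace_nonneg hs')).1
  have hσt := (Complex.le_def.1 hσ.posSemidef.trace_nonneg).1
  simp only [trace_sub, trace_smul, Complex.sub_re, Complex.zero_re, Complex.real_smul,
    Complex.re_ofReal_mul, h1, Complex.one_re] at h4 hσt
  have hs0 : 0 < s := by
    by_contra hn
    have := mul_nonneg (neg_nonneg.2 (not_lt.1 hn)) hσt
    linarith
  have := aux_ineq ρ σ hρ hσ s hs0 hs'
  rw [h1] at this
  simpa using this
end

section
/- Let X be a positive semidefinite n×n complex matrix, Y a positive definite n×n complex matrix, and K an arbitrary m×n complex matrix. Then (K X K*) (K Y K*)⁺ (K X K*) ≤ K (X Y⁻¹ X) K* in the Loewner order, where (K Y K*)⁺ denotes the Moore–Penrose pseudo-inverse of K Y K*. -/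
open Matrix Kronecker ComplexOrder

/-- The pseudo-inverse of a Hermitian matrix is Hermitian and satisfies `P M P = P`. -/
theorem mpinv_aux {m : Type*} [Fintype m] [DecidableEq m] (M : Matrix m m ℂ)
    (hM : M.IsHermitian) :
    (mpinv M)ᴴ = mpinv M ∧ mpinv M * M * mpinv M = mpinv M := by
  have hU : star (hM.eigenvectorUnitary : Matrix m m ℂ) *
      (hM.eigenvectorUnitary : Matrix m m ℂ) = 1 := Unitary.coe_star_mul_self _
  have hs := hM.spectral_theorem
  rw [Unitary.conjStarAlgAut_apply] at hs
  unfold mpinv mpow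
  rw [dif_pos hM]
  generalize hM.eigenvalues = e at *
  generalize (hM.eigenvectorUnitary : Matrix m m ℂ) = U at *
  constructor
  · simp only [star_eq_conjTranspose, conjTranspose_mul, conjTranspose_conjTranspose,
      diagonal_conjTranspose, Matrix.mul_assoc]
    congr 3
    ext i
    simp
  · have key : ∀ A B C : Matrix m m ℂ, (U * A * star U) * (U * B * star U) * (U * C * star U)
        = U * (A * B * C) * star U := by
      intro A B C
      calc _ = U * A * (star U * U) * B * (star U * U) * C * star U := by
            simp only [Matrix.mul_assoc]
        _ = _ := by rw [hU]; simp only [Matrix.mul_assoc, Matrix.one_mul]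
    conv_lhs => rw [hs]
    rw [key, diagonal_mul_diagonal, diagonal_mul_diagonal]
    congr 3
    ext i
    by_cases h : e i = 0
    · simp [h]
    · have : (e i : ℂ) ≠ 0 := by exact_mod_cast h
      simp [h, Real.rpow_neg_one, this]

/-- `(K X K*)(K Y K*)⁺(K X K*) ≤ K (X Y⁻¹ X) K*` for `X` PSD, `Y` positive
definite and any `K`, where `⁺` is the Moore–Penrose pseudo-inverse. -/
theorem pinv_transformer {n m : Type*} [Fintype n] [DecidableEq n]
    [Fintype m] [DecidableEq m]
    (X Y : Matrix n n ℂ) (hX : X.PosSemidef) (hY : Y.PosDef) (K : Matrix m n ℂ) :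
    Loewner ((K * X * Kᴴ) * mpinv (K * Y * Kᴴ) * (K * X * Kᴴ))
      (K * (X * Y⁻¹ * X) * Kᴴ) := by
  have hM : (K * Y * Kᴴ).IsHermitian := isHermitian_mul_mul_conjTranspose K hY.1
  obtain ⟨h1, h2⟩ := mpinv_aux _ hM
  unfold Loewner
  generalize mpinv (K * Y * Kᴴ) = P at *
  have hdet : IsUnit Y.det := (Matrix.isUnit_iff_isUnit_det Y).1 hY.isUnit
  have hX1 : Xᴴ = X := hX.1
  have hY1 : (Y⁻¹)ᴴ = Y⁻¹ := hY.1.inv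
  have hps := hY.posSemidef.conjTranspose_mul_mul_same (Y⁻¹ * X * Kᴴ - Kᴴ * P * (K * X * Kᴴ))
  convert hps using 1
  have e1 : (Y⁻¹ * X * Kᴴ - Kᴴ * P * (K * X * Kᴴ))ᴴ
      = K * X * Y⁻¹ - (K * X * Kᴴ) * P * K := by
    simp only [conjTranspose_sub, conjTranspose_mul, conjTranspose_conjTranspose, h1, hX1, hY1,
      Matrix.mul_assoc]
  have e2 : (K * X * Y⁻¹ - (K * X * Kᴴ) * P * K) * Y = K * X - (K * X * Kᴴ) * P * K * Y := by
    rw [Matrix.sub_mul, Matrix.mul_assoc (K * X), Matrix.nonsing_inv_mul _ hdet, Matrix.mul_one]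
  have e3 : (K * X * Kᴴ) * P * K * Y * (Y⁻¹ * X * Kᴴ) = (K * X * Kᴴ) * P * (K * X * Kᴴ) := by
    calc _ = (K * X * Kᴴ) * P * K * (Y * Y⁻¹) * X * Kᴴ := by simp only [Matrix.mul_assoc]
      _ = _ := by rw [Matrix.mul_nonsing_inv _ hdet]; simp only [Matrix.mul_assoc, Matrix.one_mul]
  have e4 : (K * X * Kᴴ) * P * K * Y * (Kᴴ * P * (K * X * Kᴴ))
      = (K * X * Kᴴ) * P * (K * X * Kᴴ) := by
    calc _ = (K * X * Kᴴ) * (P * (K * Y * Kᴴ) * P) * (K * X * Kᴴ) := by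
          simp only [Matrix.mul_assoc]
      _ = _ := by rw [h2]
  rw [e1, e2, Matrix.sub_mul, Matrix.mul_sub, Matrix.mul_sub, e3, e4, sub_self, sub_zero]
  simp only [Matrix.mul_assoc]
end

section
/- Let X and Y be positive definite n×n complex matrices and let K be an m×n complex matrix of full row rank m (so that K X K* and K Y K* are positive definite). Then D_op(K X K*, K Y K*) ≤ K D_op(X, Y) K* in the Loewner order; moreover, if m = n (so K is invertible), equality holds: D_op(K X K*, K Y K*) = K D_op(X, Y) K*. -/
open Matrix Kronecker ComplexOrder

namespace DopAux

lemma mlog_spec {n : Type*} [Fintype n] [DecidableEq n] {A : Matrix n n ℂ} (hA : A.IsHermitian) :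
    ∃ (U : Matrix n n ℂ) (d : n → ℝ), Uᴴ * U = 1 ∧ U * Uᴴ = 1 ∧
      A = U * diagonal (fun i => (d i : ℂ)) * Uᴴ ∧
      mlog A = U * diagonal (fun i => (Real.log (d i) : ℂ)) * Uᴴ := by
  refine ⟨hA.eigenvectorUnitary, hA.eigenvalues, ?_, ?_, ?_, ?_⟩
  · exact Unitary.coe_star_mul_self hA.eigenvectorUnitary
  · exact Unitary.coe_mul_star_self hA.eigenvectorUnitary
  · conv_lhs => rw [hA.spectral_theorem, Unitary.conjStarAlgAut_apply]
    rfl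
  · rw [mlog, dif_pos hA]
    rfl

lemma mlog_isHermitian {n : Type*} [Fintype n] [DecidableEq n] {A : Matrix n n ℂ}
    (hA : A.IsHermitian) : (mlog A).IsHermitian := by
  obtain ⟨U, d, h1, h2, h3, h4⟩ := mlog_spec hA
  rw [h4]
  apply isHermitian_mul_mul_conjTranspose
  apply isHermitian_diagonal_of_self_adjoint
  ext i
  simp

lemma mlog_intertwine {n m : Type*} [Fintype n] [DecidableEq n] [Fintype m] [DecidableEq m]
    {B : Matrix n n ℂ} {C : Matrix m m ℂ} (hB : B.IsHermitian) (hC : C.IsHermitian)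
    (V : Matrix n m ℂ) (h : B * V = V * C) : mlog B * V = V * mlog C := by
  obtain ⟨U, d, h1, h2, h3, h4⟩ := mlog_spec hB
  obtain ⟨W, e, k1, k2, k3, k4⟩ := mlog_spec hC
  have key : diagonal (fun i => (d i : ℂ)) * (Uᴴ * V * W)
      = (Uᴴ * V * W) * diagonal (fun i => (e i : ℂ)) := by
    calc _ = (Uᴴ * U) * diagonal (fun i => (d i : ℂ)) * (Uᴴ * V * W) := by rw [h1, one_mul]
      _ = Uᴴ * (B * V) * W := by rw [h3]; simp only [Matrix.mul_assoc]
      _ = (Uᴴ * V * W) * diagonal (fun i => (e i : ℂ)) * (Wᴴ * W) := by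
          rw [h, k3]; simp only [Matrix.mul_assoc]
      _ = _ := by rw [k1, Matrix.mul_one]
  have key2 : diagonal (fun i => (Real.log (d i) : ℂ)) * (Uᴴ * V * W)
      = (Uᴴ * V * W) * diagonal (fun i => (Real.log (e i) : ℂ)) := by
    ext i j
    have := congrFun (congrFun key i) j
    rw [diagonal_mul, mul_diagonal] at this ⊢
    by_cases hz : (Uᴴ * V * W) i j = 0
    · simp [hz]
    · rw [mul_comm] at this
      have h5 := mul_left_cancel₀ hz this
      have h6 : d i = e j := by exact_mod_cast h5
      rw [h6, mul_comm]
  calc mlog B * V = U * diagonal (fun i => (Real.log (d i) : ℂ)) * Uᴴ * V * (W * Wᴴ) := by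
        rw [h4, k2, Matrix.mul_one]
    _ = U * (diagonal (fun i => (Real.log (d i) : ℂ)) * (Uᴴ * V * W)) * Wᴴ := by
        simp only [Matrix.mul_assoc]
    _ = (U * Uᴴ) * V * (W * diagonal (fun i => (Real.log (e i) : ℂ)) * Wᴴ) := by
        rw [key2]; simp only [Matrix.mul_assoc]
    _ = V * mlog C := by rw [h2, Matrix.one_mul, k4]

lemma mlog_inv {n : Type*} [Fintype n] [DecidableEq n]
    {B C : Matrix n n ℂ} (hB : B.IsHermitian) (hC : C.IsHermitian)
    (h : B * C = 1) : mlog B = - mlog C := by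
  obtain ⟨U, d, h1, h2, h3, h4⟩ := mlog_spec hB
  obtain ⟨W, e, k1, k2, k3, k4⟩ := mlog_spec hC
  have key : diagonal (fun i => (d i : ℂ)) * (Uᴴ * W) * diagonal (fun i => (e i : ℂ))
      = Uᴴ * W := by
    calc _ = (Uᴴ * U) * diagonal (fun i => (d i : ℂ)) * (Uᴴ * W) *
            diagonal (fun i => (e i : ℂ)) * (Wᴴ * W) := by rw [h1, one_mul, k1, mul_one]
      _ = Uᴴ * (B * C) * W := by rw [h3, k3]; simp only [Matrix.mul_assoc]
      _ = _ := by rw [h, mul_one]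
  have key2 : diagonal (fun i => (Real.log (d i) : ℂ)) * (Uᴴ * W)
      = - ((Uᴴ * W) * diagonal (fun i => (Real.log (e i) : ℂ))) := by
    ext i j
    have := congrFun (congrFun key i) j
    rw [mul_diagonal, diagonal_mul] at this
    rw [neg_apply, diagonal_mul, mul_diagonal]
    by_cases hz : (Uᴴ * W) i j = 0
    · simp [hz]
    · have h5 : (d i : ℂ) * e j = 1 := by
        apply mul_left_cancel₀ hz
        linear_combination this
      have h6 : d i * e j = 1 := by exact_mod_cast h5
      have h7 : d i = (e j)⁻¹ := eq_inv_of_mul_eq_one_left h6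
      rw [h7, Real.log_inv]
      push_cast
      ring
  calc mlog B = U * diagonal (fun i => (Real.log (d i) : ℂ)) * Uᴴ * (W * Wᴴ) := by
        rw [h4, k2, mul_one]
    _ = U * (diagonal (fun i => (Real.log (d i) : ℂ)) * (Uᴴ * W)) * Wᴴ := by
        simp only [Matrix.mul_assoc]
    _ = - ((U * Uᴴ) * (W * diagonal (fun i => (Real.log (e i) : ℂ)) * Wᴴ)) := by
        rw [key2]; simp only [Matrix.mul_assoc, Matrix.mul_neg, Matrix.neg_mul]
    _ = - mlog C := by rw [h2, one_mul, k4]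

lemma mpow_half {n : Type*} [Fintype n] [DecidableEq n] {X : Matrix n n ℂ} (hX : X.PosDef) :
    (mpow X (1/2))ᴴ = mpow X (1/2) ∧ mpow X (1/2) * mpow X (1/2) = X := by
  have hH := hX.isHermitian
  have e : mpow X (1/2) = (hH.eigenvectorUnitary : Matrix n n ℂ) *
      Matrix.diagonal (fun i => ((Real.sqrt (hH.eigenvalues i) : ℝ) : ℂ)) *
      (hH.eigenvectorUnitary : Matrix n n ℂ)ᴴ := by
    rw [mpow, dif_pos hH]
    congr 3
    ext i
    rw [if_neg (hX.eigenvalues_pos i).ne', Real.sqrt_eq_rpow]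
  have hu : (hH.eigenvectorUnitary : Matrix n n ℂ)ᴴ * (hH.eigenvectorUnitary : Matrix n n ℂ) = 1 :=
    Unitary.coe_star_mul_self hH.eigenvectorUnitary
  rw [e]
  constructor
  · apply isHermitian_mul_mul_conjTranspose
    apply isHermitian_diagonal_of_self_adjoint
    ext i
    simp
  · generalize hU : (hH.eigenvectorUnitary : Matrix n n ℂ) = U at hu
    calc _ = U * (diagonal (fun i => ((Real.sqrt (hH.eigenvalues i) : ℝ) : ℂ)) * ((Uᴴ * U) *
          diagonal (fun i => ((Real.sqrt (hH.eigenvalues i) : ℝ) : ℂ)))) * Uᴴ := by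
          simp only [Matrix.mul_assoc]
      _ = U * diagonal (fun i => (hH.eigenvalues i : ℂ)) * Uᴴ := by
          rw [hu, one_mul, diagonal_mul_diagonal]
          congr 3
          ext i
          rw [← Complex.ofReal_mul, Real.mul_self_sqrt (hX.eigenvalues_pos i).le]
      _ = X := by
          conv_rhs => rw [hH.spectral_theorem, Unitary.conjStarAlgAut_apply]
          rw [← hU]
          rfl

open scoped MatrixOrder Matrix.Norms.L2Operator in
lemma mlog_concave {n : Type*} [Fintype n] [DecidableEq n] {A B : Matrix n n ℂ}
    (hA : A.PosDef) (hB : B.PosDef) :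
    (mlog ((1/2 : ℝ) • A + (1/2 : ℝ) • B) - ((1/2 : ℝ) • mlog A + (1/2 : ℝ) • mlog B)).PosSemidef := by
  have e : ∀ C : Matrix n n ℂ, C.PosDef → mlog C = CFC.log C := by
    intro C hC
    rw [CFC.log, hC.isHermitian.cfc_eq, mlog, dif_pos hC.isHermitian, IsHermitian.cfc,
      Unitary.conjStarAlgAut_apply]
    rfl
  have hAB : ((1/2 : ℝ) • A + (1/2 : ℝ) • B).PosDef := by
    exact (hA.smul (by norm_num)).add (hB.smul (by norm_num))
  rw [e _ hA, e _ hB, e _ hAB, ← Matrix.le_iff]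
  exact (CFC.concaveOn_log (A := Matrix n n ℂ)).2 hA.isStrictlyPositive hB.isStrictlyPositive
    (by norm_num) (by norm_num) (by norm_num)

lemma jensen {n m : Type*} [Fintype n] [DecidableEq n] [Fintype m] [DecidableEq m]
    {A : Matrix n n ℂ} (hA : A.PosDef) (V : Matrix n m ℂ) (hV : Vᴴ * V = 1) :
    (mlog (Vᴴ * A * V) - Vᴴ * mlog A * V).PosSemidef := by
  set U : Matrix n n ℂ := 2 • (V * Vᴴ) - 1 with hU
  have hUV : U * V = V := by
    rw [hU, Matrix.sub_mul, Matrix.smul_mul, Matrix.mul_assoc, hV]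
    simp [two_smul]
  have hUH : Uᴴ = U := by
    rw [hU, two_nsmul]
    simp [conjTranspose_sub, conjTranspose_mul]
  have hVU : Vᴴ * U = Vᴴ := by
    have := congrArg conjTranspose hUV
    rwa [conjTranspose_mul, hUH] at this
  have hUU : U * U = 1 := by
    nth_rw 2 [hU]
    rw [Matrix.mul_sub, Matrix.mul_smul, ← Matrix.mul_assoc, hUV, mul_one, hU]
    abel
  have hUA : (U * A * U).PosDef := by
    have hu : IsUnit U := IsUnit.of_mul_eq_one U hUU
    have := hA.mul_mul_conjTranspose_same (B := U) (vecMul_injective_iff_isUnit.2 hu)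
    rwa [hUH] at this
  have hlogU : mlog (U * A * U) = U * mlog A * U := by
    have := mlog_intertwine hUA.isHermitian hA.isHermitian U
      (by rw [Matrix.mul_assoc, hUU, mul_one])
    calc _ = mlog (U * A * U) * (U * U) := by rw [hUU, mul_one]
      _ = _ := by rw [← Matrix.mul_assoc, this]
  have hB : ((1/2 : ℝ) • A + (1/2 : ℝ) • (U * A * U)).PosDef :=
    (hA.smul (by norm_num)).add (hUA.smul (by norm_num))
  have hC : (Vᴴ * A * V).IsHermitian := isHermitian_conjTranspose_mul_mul V hA.isHermitian
  have hBV : ((1/2 : ℝ) • A + (1/2 : ℝ) • (U * A * U)) * V = V * (Vᴴ * A * V) := by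
    rw [Matrix.add_mul, Matrix.smul_mul, Matrix.smul_mul, Matrix.mul_assoc, hUV, hU,
      Matrix.sub_mul, Matrix.sub_mul, Matrix.one_mul, ← smul_add]
    simp only [Matrix.smul_mul, Matrix.mul_assoc, add_sub_cancel]
    rw [two_nsmul, ← two_smul ℝ, smul_smul]
    norm_num
  have hi := mlog_intertwine hB.isHermitian hC V hBV
  have hc := (mlog_concave hA hUA).conjTranspose_mul_mul_same V
  convert hc using 1
  rw [Matrix.mul_sub, Matrix.sub_mul, Matrix.mul_assoc Vᴴ (mlog (_ + _)) V, hi, ← Matrix.mul_assoc Vᴴ V, hV,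
    Matrix.one_mul, hlogU, Matrix.mul_add, Matrix.add_mul, Matrix.mul_smul, Matrix.mul_smul,
    Matrix.smul_mul, Matrix.smul_mul]
  have : Vᴴ * (U * mlog A * U) * V = Vᴴ * mlog A * V := by
    calc _ = (Vᴴ * U) * mlog A * (U * V) := by simp only [Matrix.mul_assoc]
      _ = _ := by rw [hVU, hUV]
  rw [this, ← add_smul]
  norm_num

lemma Dop_form {n : Type*} [Fintype n] [DecidableEq n] {X Y : Matrix n n ℂ}
    (hX : X.PosDef) (hY : Y.PosDef) :
    ∃ R S : Matrix n n ℂ, Rᴴ = R ∧ Sᴴ = S ∧ R * R = X ∧ R * S = 1 ∧ S * R = 1 ∧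
      (S * Y * S).PosDef ∧ Dop X Y = - (R * mlog (S * Y * S) * R) := by
  obtain ⟨h1, h2⟩ := mpow_half hX
  unfold Dop
  generalize mpow X (1/2) = R at h1 h2
  have hR : IsUnit R := by
    have : IsUnit (R * R) := h2 ▸ hX.isUnit
    exact isUnit_of_mul_isUnit_left this
  have hd := (isUnit_iff_isUnit_det R).1 hR
  have hRS : R * R⁻¹ = 1 := mul_nonsing_inv R hd
  have hSR : R⁻¹ * R = 1 := nonsing_inv_mul R hd
  have hS : (R⁻¹)ᴴ = R⁻¹ := by rw [conjTranspose_nonsing_inv, h1]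
  have hYd := (isUnit_iff_isUnit_det Y).1 hY.isUnit
  have hP : (R⁻¹ * Y * R⁻¹).PosDef := by
    have hu : IsUnit R⁻¹ := IsUnit.of_mul_eq_one R hSR
    have := hY.mul_mul_conjTranspose_same (B := R⁻¹) (vecMul_injective_iff_isUnit.2 hu)
    rwa [hS] at this
  refine ⟨R, R⁻¹, h1, hS, h2, hRS, hSR, hP, ?_⟩
  have hH : (R * Y⁻¹ * R).IsHermitian := by
    have := isHermitian_mul_mul_conjTranspose R hY.inv.isHermitian
    rwa [h1] at this
  rw [mlog_inv hH hP.isHermitian, Matrix.mul_neg, Matrix.neg_mul]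
  calc R * Y⁻¹ * R * (R⁻¹ * Y * R⁻¹) = R * Y⁻¹ * (R * R⁻¹) * Y * R⁻¹ := by
        simp only [Matrix.mul_assoc]
    _ = R * (Y⁻¹ * Y) * R⁻¹ := by rw [hRS, mul_one]; simp only [Matrix.mul_assoc]
    _ = 1 := by rw [nonsing_inv_mul Y hYd, mul_one, hRS]

lemma main {n m : Type*} [Fintype n] [DecidableEq n] [Fintype m] [DecidableEq m]
    {X Y : Matrix n n ℂ} (hX : X.PosDef) (hY : Y.PosDef) (K : Matrix m n ℂ)
    (hK : Function.Injective K.vecMul) :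
    ∃ (A : Matrix n n ℂ) (V : Matrix n m ℂ) (T : Matrix m m ℂ), A.PosDef ∧ Vᴴ * V = 1 ∧ Tᴴ = T ∧
      Dop (K * X * Kᴴ) (K * Y * Kᴴ) = - (T * mlog (Vᴴ * A * V) * T) ∧
      K * Dop X Y * Kᴴ = - (T * (Vᴴ * mlog A * V) * T) := by
  obtain ⟨R, S, hR, hS, hRR, hRS, hSR, hP, hD⟩ := Dop_form hX hY
  obtain ⟨R', S', hR', hS', hRR', hRS', hSR', hP', hD'⟩ :=
    Dop_form (hX.mul_mul_conjTranspose_same hK) (hY.mul_mul_conjTranspose_same hK)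
  have hVH : (R * Kᴴ * S')ᴴ = S' * K * R := by
    simp [conjTranspose_mul, hR, hS', Matrix.mul_assoc]
  refine ⟨S * Y * S, R * Kᴴ * S', R', hP, ?_, hR', ?_, ?_⟩
  · rw [hVH]
    calc _ = S' * (K * (R * R) * Kᴴ) * S' := by simp only [Matrix.mul_assoc]
      _ = (S' * R') * (R' * S') := by rw [hRR, ← hRR']; simp only [Matrix.mul_assoc]
      _ = 1 := by rw [hSR', hRS', one_mul]
  · rw [hD', hVH]
    congr 4
    symm
    calc _ = S' * (K * ((R * S) * Y * (S * R)) * Kᴴ) * S' := by simp only [Matrix.mul_assoc]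
      _ = _ := by rw [hRS, hSR, one_mul, mul_one]
  · rw [hD, hVH, Matrix.mul_neg, Matrix.neg_mul]
    congr 1
    symm
    calc _ = (R' * S') * (K * (R * mlog (S * Y * S) * R) * Kᴴ) * (S' * R') := by
          simp only [Matrix.mul_assoc]
      _ = _ := by rw [hRS', hSR', one_mul, mul_one]

end DopAux

/-- transformer inequality for the operator relative entropy:
`D_op(K X K*, K Y K*) ≤ K D_op(X, Y) K*` for `K` of full row rank, with equality for
square invertible `K`. -/
theorem Dop_transformer {n m : Type*} [Fintype n] [DecidableEq n]
    [Fintype m] [DecidableEq m]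
    (X Y : Matrix n n ℂ) (hX : X.PosDef) (hY : Y.PosDef) :
    (∀ K : Matrix m n ℂ, K.rank = Fintype.card m →
        Loewner (Dop (K * X * Kᴴ) (K * Y * Kᴴ)) (K * Dop X Y * Kᴴ)) ∧
    (∀ K : Matrix n n ℂ, IsUnit K →
        Dop (K * X * Kᴴ) (K * Y * Kᴴ) = K * Dop X Y * Kᴴ) := by
  constructor
  · intro K hK
    have hinj : Function.Injective K.vecMul := by
      rw [vecMul_injective_iff, linearIndependent_iff_card_eq_finrank_span, ← hK,
        rank_eq_finrank_span_row]
      rfl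
    obtain ⟨A, V, T, hA, hV, hT, h1, h2⟩ := DopAux.main hX hY K hinj
    unfold Loewner
    rw [h1, h2]
    have := (DopAux.jensen hA V hV).mul_mul_conjTranspose_same T
    rw [hT] at this
    convert this using 1
    rw [Matrix.mul_sub, Matrix.sub_mul]
    abel
  · intro K hK
    obtain ⟨A, V, T, hA, hV, hT, h1, h2⟩ :=
      DopAux.main hX hY K (vecMul_injective_iff_isUnit.2 hK)
    rw [h1, h2]
    have hV' : V * Vᴴ = 1 := mul_eq_one_comm.1 hV
    have := DopAux.mlog_intertwine hA.isHermitian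
      (isHermitian_conjTranspose_mul_mul V hA.isHermitian) V
      (by rw [← Matrix.mul_assoc, ← Matrix.mul_assoc, hV', Matrix.one_mul])
    rw [Matrix.mul_assoc Vᴴ (mlog A) V, this, ← Matrix.mul_assoc Vᴴ V, hV, Matrix.one_mul]
end

section
/- Let X and Y be positive definite n×n complex matrices. Then the matrix-valued function γ ↦ (−1/γ)·(G_γ(X, Y) − X) tends to D_op(X, Y) as γ → 0 over nonzero real γ. -/
open Matrix Kronecker ComplexOrder

lemma aux_diag_mul {n : Type*} [Fintype n] [DecidableEq n] {A : Matrix n n ℂ}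
    (hA : A.IsHermitian) (f g : n → ℂ) :
    ((hA.eigenvectorUnitary : Matrix n n ℂ) * diagonal f *
      star (hA.eigenvectorUnitary : Matrix n n ℂ)) *
    ((hA.eigenvectorUnitary : Matrix n n ℂ) * diagonal g *
      star (hA.eigenvectorUnitary : Matrix n n ℂ)) =
    (hA.eigenvectorUnitary : Matrix n n ℂ) * diagonal (fun i => f i * g i) *
      star (hA.eigenvectorUnitary : Matrix n n ℂ) := by
  have h : star (hA.eigenvectorUnitary : Matrix n n ℂ) * (hA.eigenvectorUnitary : Matrix n n ℂ)
      = 1 := Unitary.coe_star_mul_self _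
  rw [← diagonal_mul_diagonal]
  simp only [Matrix.mul_assoc]
  rw [← Matrix.mul_assoc (star _) _ (diagonal g * _), h, Matrix.one_mul]

lemma aux_spec {n : Type*} [Fintype n] [DecidableEq n] {A : Matrix n n ℂ}
    (hA : A.IsHermitian) :
    (hA.eigenvectorUnitary : Matrix n n ℂ) * diagonal (fun i => (hA.eigenvalues i : ℂ)) *
      star (hA.eigenvectorUnitary : Matrix n n ℂ) = A := by
  conv_rhs => rw [hA.spectral_theorem]
  rfl

lemma aux_mpow {n : Type*} [Fintype n] [DecidableEq n] {A : Matrix n n ℂ}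
    (hA : A.PosDef) (β : ℝ) : mpow A β =
    (hA.isHermitian.eigenvectorUnitary : Matrix n n ℂ) *
      diagonal (fun i => ((hA.isHermitian.eigenvalues i ^ β : ℝ) : ℂ)) *
      star (hA.isHermitian.eigenvectorUnitary : Matrix n n ℂ) := by
  rw [mpow, dif_pos hA.isHermitian]
  simp only [(hA.eigenvalues_pos _).ne', if_false]

lemma aux_mpow_mul {n : Type*} [Fintype n] [DecidableEq n] {A : Matrix n n ℂ}
    (hA : A.PosDef) (β γ : ℝ) : mpow A β * mpow A γ = mpow A (β + γ) := by
  simp only [aux_mpow hA, aux_diag_mul, ← Complex.ofReal_mul,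
    ← Real.rpow_add (hA.eigenvalues_pos _)]

lemma aux_mpow_zero {n : Type*} [Fintype n] [DecidableEq n] {A : Matrix n n ℂ}
    (hA : A.PosDef) : mpow A 0 = 1 := by
  rw [aux_mpow hA]
  simp

lemma aux_mpow_one {n : Type*} [Fintype n] [DecidableEq n] {A : Matrix n n ℂ}
    (hA : A.PosDef) : mpow A 1 = A := by
  rw [aux_mpow hA]
  simp only [Real.rpow_one, aux_spec]

lemma aux_mpow_herm {n : Type*} [Fintype n] [DecidableEq n] {A : Matrix n n ℂ}
    (hA : A.PosDef) (β : ℝ) : (mpow A β)ᴴ = mpow A β := by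
  rw [aux_mpow hA]
  simp only [conjTranspose_mul, star_eq_conjTranspose, conjTranspose_conjTranspose,
    diagonal_conjTranspose, Matrix.mul_assoc]
  congr 3
  ext i
  simp

lemma aux_mlog {n : Type*} [Fintype n] [DecidableEq n] {A : Matrix n n ℂ}
    (hA : A.IsHermitian) : mlog A = cfc Real.log A := by
  rw [mlog, dif_pos hA, hA.cfc_eq]
  rfl

lemma aux_mlog_inv {n : Type*} [Fintype n] [DecidableEq n] {A : Matrix n n ℂ}
    (hA : A.PosDef) : mlog A⁻¹ = - mlog A := by
  have hfin : (spectrum ℝ A).Finite := Matrix.finite_real_spectrum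
  have h1 : A⁻¹ = cfc (fun x : ℝ => x⁻¹) A := by
    apply Matrix.inv_eq_right_inv
    rw [hA.isHermitian.cfc_eq]
    refine (congrArg (· * _) (aux_spec hA.isHermitian).symm).trans ?_
    have := aux_diag_mul hA.isHermitian (fun i => (hA.isHermitian.eigenvalues i : ℂ))
      (fun i => ((hA.isHermitian.eigenvalues i)⁻¹ : ℝ))
    refine this.trans ?_
    have h2 : ∀ i, (hA.isHermitian.eigenvalues i : ℂ) ≠ 0 := fun i =>
      Complex.ofReal_ne_zero.2 (hA.eigenvalues_pos i).ne'
    simp [h2]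
  rw [aux_mlog hA.inv.isHermitian, aux_mlog hA.isHermitian, h1,
    ← cfc_comp Real.log (fun x : ℝ => x⁻¹) A hA.isHermitian.isSelfAdjoint
      ((hfin.image _).continuousOn _) (hfin.continuousOn _), ← cfc_neg]
  congr 1
  ext x
  simp

lemma aux_tendsto {n : Type*} [Fintype n] [DecidableEq n] {A : Matrix n n ℂ}
    (hA : A.PosDef) : Filter.Tendsto (fun γ : ℝ => (-γ⁻¹) • (mpow A γ - 1))
      (nhdsWithin 0 {(0 : ℝ)}ᶜ) (nhds (-mlog A)) := by
  have hs : ∀ i, Filter.Tendsto (fun γ : ℝ => γ⁻¹ * (hA.isHermitian.eigenvalues i ^ γ - 1))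
      (nhdsWithin 0 {(0 : ℝ)}ᶜ) (nhds (Real.log (hA.isHermitian.eigenvalues i))) := by
    intro i
    have h := (Real.hasStrictDerivAt_const_rpow (hA.eigenvalues_pos i) 0).hasDerivAt
    rw [hasDerivAt_iff_tendsto_slope_zero] at h
    simpa using h
  have hU : (1 : Matrix n n ℂ) = (hA.isHermitian.eigenvectorUnitary : Matrix n n ℂ) *
      diagonal (fun _ => 1) * star (hA.isHermitian.eigenvectorUnitary : Matrix n n ℂ) := by
    simp
  have he : (fun γ : ℝ => (-γ⁻¹) • (mpow A γ - 1)) = fun γ : ℝ =>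
      -((hA.isHermitian.eigenvectorUnitary : Matrix n n ℂ) *
      diagonal (fun i => ((γ⁻¹ * (hA.isHermitian.eigenvalues i ^ γ - 1) : ℝ) : ℂ)) *
      star (hA.isHermitian.eigenvectorUnitary : Matrix n n ℂ)) := by
    ext1 γ
    rw [aux_mpow hA, hU, ← Matrix.sub_mul, ← Matrix.mul_sub, neg_smul, ← Matrix.smul_mul,
      ← Matrix.mul_smul, diagonal_sub, ← diagonal_smul]
    congr 4
    ext i
    simp
  rw [he, mlog, dif_pos hA.isHermitian]
  refine Filter.Tendsto.neg ?_
  have hd : Filter.Tendsto (fun γ : ℝ =>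
      diagonal (fun i => ((γ⁻¹ * (hA.isHermitian.eigenvalues i ^ γ - 1) : ℝ) : ℂ)))
      (nhdsWithin 0 {(0 : ℝ)}ᶜ)
      (nhds (diagonal fun i => (Real.log (hA.isHermitian.eigenvalues i) : ℂ))) := by
    refine ((continuous_id.matrix_diagonal).tendsto _).comp ?_
    exact tendsto_pi_nhds.2 fun i => (Complex.continuous_ofReal.tendsto _).comp (hs i)
  exact (tendsto_const_nhds.mul hd).mul tendsto_const_nhds

/-- `(−1/γ)·(G_γ(X,Y) − X) → D_op(X,Y)` as `γ → 0` over nonzero real `γ`,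
for positive definite `X, Y`. -/
theorem geomMean_tendsto_Dop {n : Type*} [Fintype n] [DecidableEq n]
    (X Y : Matrix n n ℂ) (hX : X.PosDef) (hY : Y.PosDef) :
    Filter.Tendsto (fun γ : ℝ => (-γ⁻¹) • (geomMean γ X Y - X))
      (nhdsWithin 0 {(0 : ℝ)}ᶜ) (nhds (Dop X Y)) := by
  have hST : mpow X (1/2) * mpow X (-(1/2)) = 1 := by
    rw [aux_mpow_mul hX, add_neg_cancel, aux_mpow_zero hX]
  have hTS : mpow X (-(1/2)) * mpow X (1/2) = 1 := by
    rw [aux_mpow_mul hX, neg_add_cancel, aux_mpow_zero hX]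
  have hSS : mpow X (1/2) * mpow X (1/2) = X := by
    rw [aux_mpow_mul hX, add_halves, aux_mpow_one hX]
  have hTH := aux_mpow_herm hX (-(1/2))
  unfold geomMean Dop
  generalize mpow X (1/2) = S at *
  generalize mpow X (-(1/2)) = T at *
  have hA : (T * Y * T).PosDef := by
    have := hY.conjTranspose_mul_mul_same (B := T) (by
      refine Function.LeftInverse.injective (g := S.mulVec) fun v => ?_
      simp [Matrix.mulVec_mulVec, hST])
    rwa [hTH] at this
  have hYu : Y * Y⁻¹ = 1 := Matrix.mul_nonsing_inv _ ((Matrix.isUnit_iff_isUnit_det _).1 hY.isUnit)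
  have hinv : S * Y⁻¹ * S = (T * Y * T)⁻¹ := by
    symm
    apply Matrix.inv_eq_right_inv
    calc T * Y * T * (S * Y⁻¹ * S) = T * (Y * ((T * S) * Y⁻¹)) * S := by
          simp only [Matrix.mul_assoc]
      _ = 1 := by rw [hTS, Matrix.one_mul, hYu, Matrix.mul_one, hTS]
  rw [hinv, aux_mlog_inv hA]
  have he : (fun γ : ℝ => (-γ⁻¹) • (S * mpow (T * Y * T) γ * S - X)) =
      fun γ : ℝ => S * ((-γ⁻¹) • (mpow (T * Y * T) γ - 1)) * S := by
    ext1 γ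
    rw [Matrix.mul_smul, Matrix.smul_mul, Matrix.mul_sub, Matrix.sub_mul, Matrix.mul_one, hSS]
  rw [he]
  exact (tendsto_const_nhds.mul (aux_tendsto hA)).mul tendsto_const_nhds
end

section
/- Let X₁, Y₁ be positive semidefinite n×n complex matrices, let X₂, Y₂ be positive semidefinite m×m complex matrices, and let β ∈ ℝ. Then the weighted matrix geometric mean is multiplicative under Kronecker products: G_β(X₁ ⊗ X₂, Y₁ ⊗ Y₂) = G_β(X₁, Y₁) ⊗ G_β(X₂, Y₂). -/
open Matrix Kronecker ComplexOrder

/-- The scalar function behind `mpow`. -/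
noncomputable def pw (β x : ℝ) : ℝ := if x = 0 then 0 else x ^ β

lemma pw_mul (β : ℝ) {x y : ℝ} (hx : 0 ≤ x) (hy : 0 ≤ y) :
    pw β (x * y) = pw β x * pw β y := by
  unfold pw
  by_cases h1 : x = 0
  · simp [h1]
  by_cases h2 : y = 0
  · simp [h2]
  simp [h1, h2, Real.mul_rpow hx hy]

lemma mpow_spec {n : Type*} [Fintype n] [DecidableEq n] {A : Matrix n n ℂ}
    (hA : A.IsHermitian) (β : ℝ) :
    mpow A β = (hA.eigenvectorUnitary : Matrix n n ℂ) *
      diagonal (fun i => (pw β (hA.eigenvalues i) : ℂ)) *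
      (hA.eigenvectorUnitary : Matrix n n ℂ)ᴴ := by
  rw [mpow, dif_pos hA]
  rfl

lemma spec {n : Type*} [Fintype n] [DecidableEq n] {A : Matrix n n ℂ}
    (hA : A.IsHermitian) :
    A = (hA.eigenvectorUnitary : Matrix n n ℂ) *
      diagonal (fun i => (hA.eigenvalues i : ℂ)) *
      (hA.eigenvectorUnitary : Matrix n n ℂ)ᴴ := by
  have h := hA.spectral_theorem
  rw [Unitary.conjStarAlgAut_apply] at h
  exact h

lemma eu1 {n : Type*} [Fintype n] [DecidableEq n] {A : Matrix n n ℂ}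
    (hA : A.IsHermitian) :
    (hA.eigenvectorUnitary : Matrix n n ℂ)ᴴ * (hA.eigenvectorUnitary : Matrix n n ℂ) = 1 :=
  Unitary.coe_star_mul_self hA.eigenvectorUnitary

lemma eu2 {n : Type*} [Fintype n] [DecidableEq n] {A : Matrix n n ℂ}
    (hA : A.IsHermitian) :
    (hA.eigenvectorUnitary : Matrix n n ℂ) * (hA.eigenvectorUnitary : Matrix n n ℂ)ᴴ = 1 :=
  Unitary.coe_mul_star_self hA.eigenvectorUnitary

/-- `mpow` may be computed from any unitary diagonalization. -/
lemma mpow_eq_of_diag {n : Type*} [Fintype n] [DecidableEq n] {A U : Matrix n n ℂ}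
    (hA : A.IsHermitian) (d : n → ℝ) (h1 : Uᴴ * U = 1) (h2 : U * Uᴴ = 1)
    (h : A = U * diagonal (fun i => (d i : ℂ)) * Uᴴ) (β : ℝ) :
    mpow A β = U * diagonal (fun i => (pw β (d i) : ℂ)) * Uᴴ := by
  rw [mpow_spec hA]
  have hs := spec hA
  have e1 := eu1 hA
  have e2 := eu2 hA
  generalize (hA.eigenvectorUnitary : Matrix n n ℂ) = V at *
  generalize hA.eigenvalues = e at *
  have key : diagonal (fun i => (e i : ℂ)) * (Vᴴ * U)
      = (Vᴴ * U) * diagonal (fun i => (d i : ℂ)) := by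
    calc _ = (Vᴴ * V) * diagonal (fun i => (e i : ℂ)) * (Vᴴ * U) := by rw [e1, one_mul]
      _ = Vᴴ * (V * diagonal (fun i => (e i : ℂ)) * Vᴴ) * U := by simp only [Matrix.mul_assoc]
      _ = Vᴴ * (U * diagonal (fun i => (d i : ℂ)) * Uᴴ) * U := by rw [← hs, ← h]
      _ = Vᴴ * U * diagonal (fun i => (d i : ℂ)) * (Uᴴ * U) := by simp only [Matrix.mul_assoc]
      _ = _ := by rw [h1, mul_one]
  have key2 : diagonal (fun i => (pw β (e i) : ℂ)) * (Vᴴ * U)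
      = (Vᴴ * U) * diagonal (fun i => (pw β (d i) : ℂ)) := by
    ext i j
    have hij := congrFun (congrFun key i) j
    rw [diagonal_mul, mul_diagonal] at hij ⊢
    by_cases hw : (Vᴴ * U) i j = 0
    · simp [hw]
    · rw [mul_comm] at hij
      have := mul_left_cancel₀ hw hij
      have h3 : e i = d j := by exact_mod_cast this
      rw [h3, mul_comm]
  calc V * diagonal (fun i => (pw β (e i) : ℂ)) * Vᴴ
      = V * diagonal (fun i => (pw β (e i) : ℂ)) * Vᴴ * (U * Uᴴ) := by rw [h2, mul_one]
    _ = V * (diagonal (fun i => (pw β (e i) : ℂ)) * (Vᴴ * U)) * Uᴴ := by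
        simp only [Matrix.mul_assoc]
    _ = (V * Vᴴ) * U * diagonal (fun i => (pw β (d i) : ℂ)) * Uᴴ := by
        rw [key2]; simp only [Matrix.mul_assoc]
    _ = _ := by rw [e2, one_mul]

lemma mpow_kron {n m : Type*} [Fintype n] [DecidableEq n] [Fintype m] [DecidableEq m]
    {A : Matrix n n ℂ} {B : Matrix m m ℂ} (hA : A.PosSemidef) (hB : B.PosSemidef) (β : ℝ) :
    mpow (A ⊗ₖ B) β = mpow A β ⊗ₖ mpow B β := by
  have a1 := eu1 hA.1
  have a2 := eu2 hA.1
  have b1 := eu1 hB.1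
  have b2 := eu2 hB.1
  have sA := spec hA.1
  have sB := spec hB.1
  have hd := mpow_eq_of_diag (A := A ⊗ₖ B)
    (U := (hA.1.eigenvectorUnitary : Matrix n n ℂ) ⊗ₖ (hB.1.eigenvectorUnitary : Matrix m m ℂ))
    (hA.kronecker hB).1 (fun p => hA.1.eigenvalues p.1 * hB.1.eigenvalues p.2)
    (by rw [conjTranspose_kronecker, ← mul_kronecker_mul, a1, b1, one_kronecker_one])
    (by rw [conjTranspose_kronecker, ← mul_kronecker_mul, a2, b2, one_kronecker_one])
    (by
      conv_lhs => rw [sA, sB]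
      rw [mul_kronecker_mul, mul_kronecker_mul, diagonal_kronecker_diagonal,
        conjTranspose_kronecker]
      simp only [Complex.ofReal_mul]) β
  rw [hd, mpow_spec hA.1, mpow_spec hB.1, mul_kronecker_mul, mul_kronecker_mul,
    diagonal_kronecker_diagonal, conjTranspose_kronecker]
  simp only [pw_mul β (hA.eigenvalues_nonneg _) (hB.eigenvalues_nonneg _), Complex.ofReal_mul]

lemma mpow_herm {n : Type*} [Fintype n] [DecidableEq n]
    {A : Matrix n n ℂ} (hA : A.IsHermitian) (β : ℝ) : (mpow A β)ᴴ = mpow A β := by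
  rw [mpow_spec hA, conjTranspose_mul, conjTranspose_mul, conjTranspose_conjTranspose,
    diagonal_conjTranspose, ← Matrix.mul_assoc]
  congr 3
  ext i
  simp

lemma sandwich_psd {n : Type*} [Fintype n] [DecidableEq n]
    {X Y : Matrix n n ℂ} (hX : X.PosSemidef) (hY : Y.PosSemidef) (β : ℝ) :
    (mpow X β * Y * mpow X β).PosSemidef := by
  have h := hY.mul_mul_conjTranspose_same (mpow X β)
  rwa [mpow_herm hX.1] at h

/-- multiplicativity of the weighted matrix geometric mean under Kronecker
products: `G_β(X₁ ⊗ X₂, Y₁ ⊗ Y₂) = G_β(X₁, Y₁) ⊗ G_β(X₂, Y₂)`. -/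
theorem geomMean_kronecker {n m : Type*} [Fintype n] [DecidableEq n]
    [Fintype m] [DecidableEq m]
    (X₁ Y₁ : Matrix n n ℂ) (hX₁ : X₁.PosSemidef) (hY₁ : Y₁.PosSemidef)
    (X₂ Y₂ : Matrix m m ℂ) (hX₂ : X₂.PosSemidef) (hY₂ : Y₂.PosSemidef) (β : ℝ) :
    geomMean β (X₁ ⊗ₖ X₂) (Y₁ ⊗ₖ Y₂) = geomMean β X₁ Y₁ ⊗ₖ geomMean β X₂ Y₂ := by
  unfold geomMean
  rw [mpow_kron hX₁ hX₂, mpow_kron hX₁ hX₂, ← mul_kronecker_mul, ← mul_kronecker_mul,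
    mpow_kron (sandwich_psd hX₁ hY₁ _) (sandwich_psd hX₂ hY₂ _),
    ← mul_kronecker_mul, ← mul_kronecker_mul]
end

section
/- Let A and B be finite types and let J be a positive semidefinite matrix indexed by (A×B)×(A×B). Suppose there exists a matrix Y on (A×B)×(A×B) such that Y + J^{T_B} and Y − J^{T_B} are positive semidefinite and I_A − tr_B Y is positive semidefinite. Then for every density matrix ρ on A, the trace norm bound ‖((√ρ ⊗ I_B) J (√ρ ⊗ I_B))^{T_B}‖₁ ≤ 1 holds. (This says that every output state of a map in the Theta set lies in the Rains set PPT′.) -/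
open Matrix Kronecker ComplexOrder

open scoped MatrixOrder in
theorem aux_psd_sq_unique {n : Type*} [Fintype n] [DecidableEq n] {P Q : Matrix n n ℂ}
    (hP : P.PosSemidef) (hQ : Q.PosSemidef) (h : P * P = Q * Q) : P = Q := by
  rw [← CFC.sqrt_mul_self P hP.nonneg, h, CFC.sqrt_mul_self Q hQ.nonneg]

theorem aux_spec_s15 {n : Type*} [Fintype n] [DecidableEq n] {M : Matrix n n ℂ}
    (hM : M.IsHermitian) :
    M = (hM.eigenvectorUnitary : Matrix n n ℂ) *
      Matrix.diagonal (fun i => (Complex.ofReal (hM.eigenvalues i))) *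
      (hM.eigenvectorUnitary : Matrix n n ℂ)ᴴ := by
  have := hM.spectral_theorem
  rw [Unitary.conjStarAlgAut_apply] at this
  exact this

theorem aux_conj_mul {n : Type*} [Fintype n] [DecidableEq n] (U D E : Matrix n n ℂ)
    (hU : Uᴴ * U = 1) : (U * D * Uᴴ) * (U * E * Uᴴ) = U * (D * E) * Uᴴ := by
  calc (U * D * Uᴴ) * (U * E * Uᴴ) = U * D * (Uᴴ * U) * E * Uᴴ := by
        simp only [Matrix.mul_assoc]
    _ = _ := by rw [hU]; simp only [Matrix.mul_assoc, Matrix.mul_one, Matrix.one_mul]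

theorem aux_mpow_half {n : Type*} [Fintype n] [DecidableEq n] {M : Matrix n n ℂ}
    (hM : M.PosSemidef) :
    (mpow M (1/2)).PosSemidef ∧ mpow M (1/2) * mpow M (1/2) = M := by
  have hH := hM.isHermitian
  have hU : (hH.eigenvectorUnitary : Matrix n n ℂ)ᴴ * (hH.eigenvectorUnitary : Matrix n n ℂ) = 1 :=
    Unitary.coe_star_mul_self _
  rw [mpow, dif_pos hH, star_eq_conjTranspose]
  constructor
  · apply PosSemidef.mul_mul_conjTranspose_same
    apply PosSemidef.diagonal
    intro i
    have : (0:ℝ) ≤ (if hH.eigenvalues i = 0 then 0 else (hH.eigenvalues i) ^ (1/2 : ℝ)) := by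
      split_ifs
      · exact le_rfl
      · exact Real.rpow_nonneg (hM.eigenvalues_nonneg i) _
    simpa using this
  · rw [aux_conj_mul _ _ _ hU]
    conv_rhs => rw [aux_spec_s15 hH]
    rw [diagonal_mul_diagonal]
    congr 3
    funext i
    rw [← Complex.ofReal_mul]
    congr 1
    split_ifs with h
    · simp [h]
    · rw [← Real.sqrt_eq_rpow, Real.mul_self_sqrt (hM.eigenvalues_nonneg i)]

theorem aux_traceNorm_le {n : Type*} [Fintype n] [DecidableEq n] {X W : Matrix n n ℂ}
    (hX : X.IsHermitian) (h1 : (W + X).PosSemidef) (h2 : (W - X).PosSemidef) :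
    traceNorm X ≤ W.trace.re := by
  set U := (hX.eigenvectorUnitary : Matrix n n ℂ) with hUdef
  have hU : Uᴴ * U = 1 := Unitary.coe_star_mul_self _
  have hU' : U * Uᴴ = 1 := Unitary.coe_mul_star_self _
  have hXs : X = U * Matrix.diagonal (fun i => (Complex.ofReal (hX.eigenvalues i))) * Uᴴ :=
    aux_spec_s15 hX
  have hXd : Uᴴ * X * U = Matrix.diagonal (fun i => (Complex.ofReal (hX.eigenvalues i))) := by
    conv_lhs => rw [hXs]
    calc _ = (Uᴴ * U) * Matrix.diagonal (fun i => (Complex.ofReal (hX.eigenvalues i)))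
          * (Uᴴ * U) := by simp only [Matrix.mul_assoc]
      _ = _ := by rw [hU]; simp
  have hXX : (Xᴴ * X).PosSemidef := posSemidef_conjTranspose_mul_self X
  obtain ⟨hP, hPP⟩ := aux_mpow_half hXX
  have hPeq : mpow (Xᴴ * X) (1/2) =
      U * Matrix.diagonal (fun i => (Complex.ofReal |hX.eigenvalues i|)) * Uᴴ := by
    apply aux_psd_sq_unique hP
    · apply PosSemidef.mul_mul_conjTranspose_same
      apply PosSemidef.diagonal
      intro i
      have := abs_nonneg (hX.eigenvalues i)
      simpa using this
    · rw [hPP, aux_conj_mul _ _ _ hU, hX.eq]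
      conv_lhs => rw [hXs]
      rw [aux_conj_mul _ _ _ hU, diagonal_mul_diagonal, diagonal_mul_diagonal]
      congr 3
      funext i
      rw [← Complex.ofReal_mul, ← Complex.ofReal_mul, abs_mul_abs_self]
  have hWt : W.trace = (Uᴴ * W * U).trace := by
    rw [Matrix.trace_mul_comm, ← Matrix.mul_assoc, hU', Matrix.one_mul]
  rw [traceNorm, hPeq, hWt, Matrix.trace_mul_comm, ← Matrix.mul_assoc, hU, Matrix.one_mul,
    Matrix.trace_diagonal, Matrix.trace, Complex.re_sum, Complex.re_sum]
  apply Finset.sum_le_sum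
  intro i _
  have e1 := (h1.conjTranspose_mul_mul_same U).diag_nonneg (i := i)
  have e2 := (h2.conjTranspose_mul_mul_same U).diag_nonneg (i := i)
  rw [Matrix.mul_add, Matrix.add_mul, hXd] at e1
  rw [Matrix.mul_sub, Matrix.sub_mul, hXd] at e2
  have e1' := (Complex.le_def.1 e1).1
  have e2' := (Complex.le_def.1 e2).1
  simp at e1' e2'
  simp only [Complex.ofReal_re, Matrix.diag_apply]
  rw [abs_le]
  constructor <;> linarith

theorem aux_ptB_conj {A B : Type*} [Fintype A] [DecidableEq A]
    [Fintype B] [DecidableEq B] (S T : Matrix A A ℂ) (J : Matrix (A × B) (A × B) ℂ) :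
    ptB ((S ⊗ₖ (1 : Matrix B B ℂ)) * J * (T ⊗ₖ (1 : Matrix B B ℂ))) =
      (S ⊗ₖ (1 : Matrix B B ℂ)) * ptB J * (T ⊗ₖ (1 : Matrix B B ℂ)) := by
  ext ⟨a, b⟩ ⟨a', b'⟩
  simp [ptB, Matrix.mul_apply, Fintype.sum_prod_type, Matrix.one_apply]

theorem aux_trace_ptrB {A B : Type*} [Fintype A] [DecidableEq A]
    [Fintype B] [DecidableEq B] (R : Matrix A A ℂ) (Y : Matrix (A × B) (A × B) ℂ) :
    ((R ⊗ₖ (1 : Matrix B B ℂ)) * Y).trace = (R * ptrB Y).trace := by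
  simp [ptrB, Matrix.trace, Matrix.mul_apply, Fintype.sum_prod_type, Matrix.one_apply,
    Finset.mul_sum]
  refine Finset.sum_congr rfl fun a _ => ?_
  rw [Finset.sum_comm]

/-- every output state of a map in the Theta set lies in the Rains set:
`‖((√ρ ⊗ I_B) J (√ρ ⊗ I_B))^{T_B}‖₁ ≤ 1` for every density matrix `ρ` on `A`. -/
theorem theta_output_in_rains_set {A B : Type*} [Fintype A] [DecidableEq A]
    [Fintype B] [DecidableEq B]
    (J : Matrix (A × B) (A × B) ℂ) (hJ : J.PosSemidef)
    (Y : Matrix (A × B) (A × B) ℂ)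
    (h1 : (Y + ptB J).PosSemidef) (h2 : (Y - ptB J).PosSemidef)
    (h3 : ((1 : Matrix A A ℂ) - ptrB Y).PosSemidef) :
    ∀ ρ : Matrix A A ℂ, ρ.PosSemidef → ρ.trace = 1 →
      traceNorm (ptB ((mpow ρ (1/2) ⊗ₖ (1 : Matrix B B ℂ)) * J *
        (mpow ρ (1/2) ⊗ₖ (1 : Matrix B B ℂ)))) ≤ 1 := by
  intro ρ hρ htr
  obtain ⟨hS, hSS⟩ := aux_mpow_half hρ
  set S := mpow ρ (1/2) with hSdef
  have hK : (S ⊗ₖ (1 : Matrix B B ℂ))ᴴ = S ⊗ₖ (1 : Matrix B B ℂ) := by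
    rw [conjTranspose_kronecker, hS.isHermitian.eq, conjTranspose_one]
  have hJB : (ptB J).IsHermitian := by
    ext ⟨a, b⟩ ⟨a', b'⟩
    exact hJ.isHermitian.apply (a, b') (a', b)
  rw [aux_ptB_conj]
  have hX := isHermitian_conjTranspose_mul_mul (S ⊗ₖ (1 : Matrix B B ℂ)) hJB
  have p1 := h1.conjTranspose_mul_mul_same (S ⊗ₖ (1 : Matrix B B ℂ))
  have p2 := h2.conjTranspose_mul_mul_same (S ⊗ₖ (1 : Matrix B B ℂ))
  rw [hK] at hX p1 p2
  rw [Matrix.mul_add, Matrix.add_mul] at p1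
  rw [Matrix.mul_sub, Matrix.sub_mul] at p2
  refine (aux_traceNorm_le hX p1 p2).trans ?_
  rw [Matrix.trace_mul_comm, ← Matrix.mul_assoc, ← mul_kronecker_mul, hSS, Matrix.one_mul,
    aux_trace_ptrB]
  have p3 := (h3.conjTranspose_mul_mul_same S).trace_nonneg
  rw [hS.isHermitian.eq, Matrix.trace_mul_comm, ← Matrix.mul_assoc, hSS, Matrix.mul_sub,
    Matrix.mul_one, Matrix.trace_sub, htr] at p3
  have := (Complex.le_def.1 p3).1
  simp at this
  exact this
end

section
/- Let A₁, B₁, A₂, B₂ be finite types. Suppose the matrix J₁ on (A₁×B₁)×(A₁×B₁) admits matrices R₁ and S₁ (S₁ indexed by B₁) such that R₁ + J₁^{T_{B₁}}, R₁ − J₁^{T_{B₁}}, I_{A₁} ⊗ S₁ + R₁^{T_{B₁}}, and I_{A₁} ⊗ S₁ − R₁^{T_{B₁}} are all positive semidefinite and tr S₁ ≤ 1; suppose similarly J₂ admits R₂ and S₂ with the analogous conditions and tr S₂ ≤ 1. Let Ĵ denote J₁ ⊗ J₂ reindexed along the canonical bijection (A₁×B₁)×(A₂×B₂) ≃ (A₁×A₂)×(B₁×B₂).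 Then there exist matrices R (on (A₁×A₂)×(B₁×B₂)-indexed square matrices) and S (on B₁×B₂) such that R + Ĵ^{T_{B₁×B₂}}, R − Ĵ^{T_{B₁×B₂}}, I_{A₁×A₂} ⊗ S + R^{T_{B₁×B₂}}, and I_{A₁×A₂} ⊗ S − R^{T_{B₁×B₂}} are all positive semidefinite and tr S ≤ 1; indeed one may take R to be R₁ ⊗ R₂ reindexed the same way and S = S₁ ⊗ S₂. (This says the set 𝒱_β of constant-bounded subchannels is closed under tensor products, the key step in the sub-additivity of the geometric Rényi Upsilon-information.) -/
open Matrix Kronecker ComplexOrder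

theorem kron_pm_aux {m n : Type*} [Fintype m] [DecidableEq m] [Fintype n] [DecidableEq n]
    {X Y : Matrix m m ℂ} {X' Y' : Matrix n n ℂ}
    (h1 : (X + Y).PosSemidef) (h2 : (X - Y).PosSemidef)
    (h3 : (X' + Y').PosSemidef) (h4 : (X' - Y').PosSemidef) :
    (X ⊗ₖ X' + Y ⊗ₖ Y').PosSemidef ∧ (X ⊗ₖ X' - Y ⊗ₖ Y').PosSemidef := by
  have hc : (0 : ℂ) ≤ 1 / 2 := by
    rw [Complex.le_def]; norm_num
  constructor
  · have h := ((h1.kronecker h3).add (h2.kronecker h4)).smul hc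
    have e : X ⊗ₖ X' + Y ⊗ₖ Y' =
        (1 / 2 : ℂ) • ((X + Y) ⊗ₖ (X' + Y') + (X - Y) ⊗ₖ (X' - Y')) := by
      ext ⟨i, j⟩ ⟨k, l⟩
      simp only [Matrix.add_apply, Matrix.sub_apply, Matrix.smul_apply,
        Matrix.kroneckerMap_apply, smul_eq_mul]
      ring
    rw [e]
    exact h
  · have h := ((h1.kronecker h4).add (h2.kronecker h3)).smul hc
    have e : X ⊗ₖ X' - Y ⊗ₖ Y' =
        (1 / 2 : ℂ) • ((X + Y) ⊗ₖ (X' - Y') + (X - Y) ⊗ₖ (X' + Y')) := by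
      ext ⟨i, j⟩ ⟨k, l⟩
      simp only [Matrix.add_apply, Matrix.sub_apply, Matrix.smul_apply,
        Matrix.kroneckerMap_apply, smul_eq_mul]
      ring
    rw [e]
    exact h

theorem trace_nonneg_aux {A B : Type*} [Fintype A] [DecidableEq A] [Fintype B] [DecidableEq B]
    [Nonempty A] {S : Matrix B B ℂ} {Q : Matrix (A × B) (A × B) ℂ}
    (h1 : ((1 : Matrix A A ℂ) ⊗ₖ S + Q).PosSemidef)
    (h2 : ((1 : Matrix A A ℂ) ⊗ₖ S - Q).PosSemidef) : 0 ≤ S.trace := by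
  have hc : (0 : ℂ) ≤ 1 / 2 := by
    rw [Complex.le_def]; norm_num
  obtain ⟨a⟩ := ‹Nonempty A›
  have h := ((h1.add h2).smul hc).submatrix (fun b : B => (a, b))
  have e : S = ((1 / 2 : ℂ) • ((1 : Matrix A A ℂ) ⊗ₖ S + Q +
      ((1 : Matrix A A ℂ) ⊗ₖ S - Q))).submatrix (fun b : B => (a, b)) (fun b : B => (a, b)) := by
    ext i j
    simp only [Matrix.submatrix_apply, Matrix.add_apply, Matrix.sub_apply, Matrix.smul_apply,
      Matrix.kroneckerMap_apply, smul_eq_mul, Matrix.one_apply_eq]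
    ring
  rw [e]
  exact h.trace_nonneg

theorem ptB_reindex_aux {A₁ B₁ A₂ B₂ : Type*}
    (M : Matrix (A₁ × B₁) (A₁ × B₁) ℂ) (N : Matrix (A₂ × B₂) (A₂ × B₂) ℂ) :
    ptB (Matrix.reindex (Equiv.prodProdProdComm A₁ B₁ A₂ B₂)
        (Equiv.prodProdProdComm A₁ B₁ A₂ B₂) (M ⊗ₖ N)) =
      (ptB M ⊗ₖ ptB N).submatrix (Equiv.prodProdProdComm A₁ B₁ A₂ B₂).symm
        (Equiv.prodProdProdComm A₁ B₁ A₂ B₂).symm := by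
  ext ⟨⟨a, b⟩, ⟨c, d⟩⟩ ⟨⟨a', b'⟩, ⟨c', d'⟩⟩
  rfl

theorem one_kron_aux {A₁ B₁ A₂ B₂ : Type*} [DecidableEq A₁] [DecidableEq A₂]
    (S₁ : Matrix B₁ B₁ ℂ) (S₂ : Matrix B₂ B₂ ℂ) :
    (1 : Matrix (A₁ × A₂) (A₁ × A₂) ℂ) ⊗ₖ (S₁ ⊗ₖ S₂) =
      (((1 : Matrix A₁ A₁ ℂ) ⊗ₖ S₁) ⊗ₖ ((1 : Matrix A₂ A₂ ℂ) ⊗ₖ S₂)).submatrix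
        (Equiv.prodProdProdComm A₁ B₁ A₂ B₂).symm
        (Equiv.prodProdProdComm A₁ B₁ A₂ B₂).symm := by
  rw [← Matrix.one_kronecker_one]
  ext ⟨⟨a, b⟩, ⟨c, d⟩⟩ ⟨⟨a', b'⟩, ⟨c', d'⟩⟩
  exact mul_mul_mul_comm _ _ _ _

/-- the set `𝒱_β` of constant-bounded subchannels is closed under tensor
products: the witnesses `R = R₁ ⊗ R₂` (reindexed) and `S = S₁ ⊗ S₂` verify the defining
semidefinite conditions for `Ĵ = J₁ ⊗ J₂` (reindexed). -/
theorem vbeta_closed_under_tensor {A₁ B₁ A₂ B₂ : Type*}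
    [Fintype A₁] [DecidableEq A₁] [Fintype B₁] [DecidableEq B₁]
    [Fintype A₂] [DecidableEq A₂] [Fintype B₂] [DecidableEq B₂]
    [Nonempty A₁] [Nonempty A₂]
    (J₁ R₁ : Matrix (A₁ × B₁) (A₁ × B₁) ℂ) (S₁ : Matrix B₁ B₁ ℂ)
    (h11 : (R₁ + ptB J₁).PosSemidef) (h12 : (R₁ - ptB J₁).PosSemidef)
    (h13 : ((1 : Matrix A₁ A₁ ℂ) ⊗ₖ S₁ + ptB R₁).PosSemidef)
    (h14 : ((1 : Matrix A₁ A₁ ℂ) ⊗ₖ S₁ - ptB R₁).PosSemidef)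
    (h15 : S₁.trace.re ≤ 1)
    (J₂ R₂ : Matrix (A₂ × B₂) (A₂ × B₂) ℂ) (S₂ : Matrix B₂ B₂ ℂ)
    (h21 : (R₂ + ptB J₂).PosSemidef) (h22 : (R₂ - ptB J₂).PosSemidef)
    (h23 : ((1 : Matrix A₂ A₂ ℂ) ⊗ₖ S₂ + ptB R₂).PosSemidef)
    (h24 : ((1 : Matrix A₂ A₂ ℂ) ⊗ₖ S₂ - ptB R₂).PosSemidef)
    (h25 : S₂.trace.re ≤ 1) :
    (Matrix.reindex (Equiv.prodProdProdComm A₁ B₁ A₂ B₂)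
        (Equiv.prodProdProdComm A₁ B₁ A₂ B₂) (R₁ ⊗ₖ R₂) +
      ptB (Matrix.reindex (Equiv.prodProdProdComm A₁ B₁ A₂ B₂)
        (Equiv.prodProdProdComm A₁ B₁ A₂ B₂) (J₁ ⊗ₖ J₂))).PosSemidef ∧
    (Matrix.reindex (Equiv.prodProdProdComm A₁ B₁ A₂ B₂)
        (Equiv.prodProdProdComm A₁ B₁ A₂ B₂) (R₁ ⊗ₖ R₂) -
      ptB (Matrix.reindex (Equiv.prodProdProdComm A₁ B₁ A₂ B₂)
        (Equiv.prodProdProdComm A₁ B₁ A₂ B₂) (J₁ ⊗ₖ J₂))).PosSemidef ∧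
    ((1 : Matrix (A₁ × A₂) (A₁ × A₂) ℂ) ⊗ₖ (S₁ ⊗ₖ S₂) +
      ptB (Matrix.reindex (Equiv.prodProdProdComm A₁ B₁ A₂ B₂)
        (Equiv.prodProdProdComm A₁ B₁ A₂ B₂) (R₁ ⊗ₖ R₂))).PosSemidef ∧
    ((1 : Matrix (A₁ × A₂) (A₁ × A₂) ℂ) ⊗ₖ (S₁ ⊗ₖ S₂) -
      ptB (Matrix.reindex (Equiv.prodProdProdComm A₁ B₁ A₂ B₂)
        (Equiv.prodProdProdComm A₁ B₁ A₂ B₂) (R₁ ⊗ₖ R₂))).PosSemidef ∧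
    ((S₁ ⊗ₖ S₂).trace.re ≤ 1) := by
  obtain ⟨p1, p2⟩ := kron_pm_aux h11 h12 h21 h22
  obtain ⟨p3, p4⟩ := kron_pm_aux h13 h14 h23 h24
  have t1 := trace_nonneg_aux h13 h14
  have t2 := trace_nonneg_aux h23 h24
  rw [ptB_reindex_aux, ptB_reindex_aux, one_kron_aux]
  refine ⟨p1.submatrix _, p2.submatrix _, p3.submatrix _, p4.submatrix _, ?_⟩
  rw [Matrix.trace_kronecker, Complex.mul_re]
  rw [Complex.le_def] at t1 t2
  have a1 := t1.1
  have a2 := t2.1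
  have b1 := t1.2
  simp only [Complex.zero_re, Complex.zero_im] at a1 a2 b1
  rw [← b1]
  nlinarith
end

section
/- Let A and B be finite types and let J be a positive semidefinite matrix indexed by (A×B)×(A×B). Define υ(J) := inf{ tr S : S Hermitian on B, and there exist matrices K, R on (A×B)×(A×B) with K − J, R + K^{T_B}, R − K^{T_B}, I_A ⊗ S + R^{T_B}, I_A ⊗ S − R^{T_B} all positive semidefinite }, β(J) := inf{ tr S : S Hermitian on B, and there exists R with R + J^{T_B}, R − J^{T_B}, I_A ⊗ S + R^{T_B}, I_A ⊗ S − R^{T_B} all positive semidefinite }, and ζ(J) := inf{ tr S : S Hermitian on B, and there exists K with K − J, I_A ⊗ S + K^{T_B}, I_A ⊗ S − K^{T_B} all positive semidefinite }. Then υ(J) ≤ β(J) and υ(J) ≤ ζ(J). (This gives Υ_max(𝒩) ≤ min{C_β(𝒩), C_ζ(𝒩)} at the level of the semidefinite-program values, where J is the Choi matrix of 𝒩.) -/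
open Matrix Kronecker ComplexOrder

/-- The SDP value `υ(J)` underlying the Upsilon-information `Υ_max`. -/
noncomputable def upsilonVal {A B : Type*} [Fintype A] [DecidableEq A]
    [Fintype B] [DecidableEq B] (J : Matrix (A × B) (A × B) ℂ) : ℝ :=
  sInf {x : ℝ | ∃ S : Matrix B B ℂ, S.IsHermitian ∧ x = S.trace.re ∧
    ∃ K R : Matrix (A × B) (A × B) ℂ, (K - J).PosSemidef ∧
      (R + ptB K).PosSemidef ∧ (R - ptB K).PosSemidef ∧
      ((1 : Matrix A A ℂ) ⊗ₖ S + ptB R).PosSemidef ∧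
      ((1 : Matrix A A ℂ) ⊗ₖ S - ptB R).PosSemidef}

/-- The SDP value `β(J)` underlying the strong converse bound `C_β`. -/
noncomputable def betaVal {A B : Type*} [Fintype A] [DecidableEq A]
    [Fintype B] [DecidableEq B] (J : Matrix (A × B) (A × B) ℂ) : ℝ :=
  sInf {x : ℝ | ∃ S : Matrix B B ℂ, S.IsHermitian ∧ x = S.trace.re ∧
    ∃ R : Matrix (A × B) (A × B) ℂ,
      (R + ptB J).PosSemidef ∧ (R - ptB J).PosSemidef ∧
      ((1 : Matrix A A ℂ) ⊗ₖ S + ptB R).PosSemidef ∧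
      ((1 : Matrix A A ℂ) ⊗ₖ S - ptB R).PosSemidef}

/-- The SDP value `ζ(J)` underlying the strong converse bound `C_ζ`. -/
noncomputable def zetaVal {A B : Type*} [Fintype A] [DecidableEq A]
    [Fintype B] [DecidableEq B] (J : Matrix (A × B) (A × B) ℂ) : ℝ :=
  sInf {x : ℝ | ∃ S : Matrix B B ℂ, S.IsHermitian ∧ x = S.trace.re ∧
    ∃ K : Matrix (A × B) (A × B) ℂ, (K - J).PosSemidef ∧
      ((1 : Matrix A A ℂ) ⊗ₖ S + ptB K).PosSemidef ∧
      ((1 : Matrix A A ℂ) ⊗ₖ S - ptB K).PosSemidef}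

open scoped Matrix.Norms.L2Operator MatrixOrder in
lemma aux_bound {n : Type*} [Fintype n] [DecidableEq n] (M : Matrix n n ℂ) (hM : M.IsHermitian) :
    ∃ c : ℝ, 0 ≤ c ∧ ((c : ℂ) • (1 : Matrix n n ℂ) + M).PosSemidef ∧
      ((c : ℂ) • (1 : Matrix n n ℂ) - M).PosSemidef := by
  have hs : IsSelfAdjoint M := hM
  have h1 := hs.le_algebraMap_norm_self
  have h2 := hs.neg_algebraMap_norm_le_self
  rw [Matrix.le_iff] at h1 h2
  have e : algebraMap ℝ (Matrix n n ℂ) ‖M‖ = ((‖M‖ : ℝ) : ℂ) • (1 : Matrix n n ℂ) := by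
    rw [Algebra.algebraMap_eq_smul_one]
    ext i j
    simp
  rw [e] at h1 h2
  refine ⟨‖M‖, norm_nonneg _, ?_, h1⟩
  rw [sub_neg_eq_add, add_comm] at h2
  exact h2

lemma aux_psd_empty {n : Type*} [Fintype n] [IsEmpty n] (M : Matrix n n ℂ) :
    M.PosSemidef := by
  rw [Subsingleton.elim M 0]
  exact Matrix.PosSemidef.zero

lemma ptB_herm {A B : Type*} {M : Matrix (A × B) (A × B) ℂ} (h : M.IsHermitian) :
    (ptB M).IsHermitian := by
  ext x y
  simp only [ptB, Matrix.conjTranspose_apply, Matrix.of_apply]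
  exact h.apply _ _

lemma ptB_kron {A B : Type*} (P : Matrix A A ℂ) (S : Matrix B B ℂ) :
    ptB (P ⊗ₖ S) = P ⊗ₖ Sᵀ := by
  ext x y
  simp [ptB, Matrix.kroneckerMap_apply]

lemma ptB_smul_one {A B : Type*} [DecidableEq A] [DecidableEq B] (c : ℂ) :
    ptB (c • (1 : Matrix (A × B) (A × B) ℂ)) = c • (1 : Matrix (A × B) (A × B) ℂ) := by
  have : c • (1 : Matrix (A × B) (A × B) ℂ) =
      (1 : Matrix A A ℂ) ⊗ₖ (c • (1 : Matrix B B ℂ)) := by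
    rw [Matrix.kronecker_smul, Matrix.one_kronecker_one]
  rw [this, ptB_kron]
  simp

lemma half_psd {n : Type*} [Fintype n] {X Y : Matrix n n ℂ}
    (h1 : (X + Y).PosSemidef) (h2 : (X - Y).PosSemidef) : X.PosSemidef := by
  have h := (h1.add h2).smul (show (0 : ℝ) ≤ 1 / 2 by norm_num)
  have e : (1 / 2 : ℝ) • (X + Y + (X - Y)) = X := by
    ext i j
    simp
    ring
  rwa [e] at h

lemma psd_smul_one {n : Type*} [Fintype n] [DecidableEq n] {c : ℝ} (hc : 0 ≤ c) :
    ((c : ℂ) • (1 : Matrix n n ℂ)).PosSemidef :=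
  Matrix.PosSemidef.one.smul (by exact_mod_cast hc)

lemma trace_nonneg_of_kron {A B : Type*} [Fintype A] [DecidableEq A] [Nonempty A]
    [Fintype B] [DecidableEq B] {S : Matrix B B ℂ}
    (h : ((1 : Matrix A A ℂ) ⊗ₖ S).PosSemidef) : 0 ≤ S.trace.re := by
  obtain ⟨a⟩ := ‹Nonempty A›
  have h2 := h.submatrix (fun b : B => (a, b))
  have e : ((1 : Matrix A A ℂ) ⊗ₖ S).submatrix (fun b : B => (a, b)) (fun b : B => (a, b)) = S := by
    ext i j
    simp [Matrix.kroneckerMap_apply]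
  rw [e] at h2
  exact (Complex.nonneg_iff.mp h2.trace_nonneg).1

/-- `υ(J) ≤ β(J)` and `υ(J) ≤ ζ(J)`, i.e.
`Υ_max(𝒩) ≤ min{C_β(𝒩), C_ζ(𝒩)}` at the level of SDP values. -/
theorem upsilon_le_beta_zeta {A B : Type*} [Fintype A] [DecidableEq A]
    [Fintype B] [DecidableEq B]
    (J : Matrix (A × B) (A × B) ℂ) (hJ : J.PosSemidef) :
    upsilonVal J ≤ betaVal J ∧ upsilonVal J ≤ zetaVal J := by
  rcases isEmpty_or_nonempty A with hA | hA
  · simp [upsilonVal, betaVal, zetaVal, aux_psd_empty]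
  have hbdd : BddBelow {x : ℝ | ∃ S : Matrix B B ℂ, S.IsHermitian ∧ x = S.trace.re ∧
    ∃ K R : Matrix (A × B) (A × B) ℂ, (K - J).PosSemidef ∧
      (R + ptB K).PosSemidef ∧ (R - ptB K).PosSemidef ∧
      ((1 : Matrix A A ℂ) ⊗ₖ S + ptB R).PosSemidef ∧
      ((1 : Matrix A A ℂ) ⊗ₖ S - ptB R).PosSemidef} := by
    refine ⟨0, ?_⟩
    rintro x ⟨S, -, rfl, K, R, -, -, -, h1, h2⟩
    exact trace_nonneg_of_kron (half_psd h1 h2)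
  have hk : ∀ c : ℂ, (1 : Matrix A A ℂ) ⊗ₖ (c • (1 : Matrix B B ℂ)) =
      c • (1 : Matrix (A × B) (A × B) ℂ) := fun c => by
    rw [Matrix.kronecker_smul, Matrix.one_kronecker_one]
  have h0 : ∀ c : ℝ, 0 ≤ c → ((c : ℂ) • (1 : Matrix (A × B) (A × B) ℂ) +
      (c : ℂ) • (1 : Matrix (A × B) (A × B) ℂ)).PosSemidef := fun c hc =>
    (psd_smul_one hc).add (psd_smul_one hc)
  constructor
  · apply csInf_le_csInf hbdd
    · obtain ⟨c, hc, h1, h2⟩ := aux_bound (ptB J) (ptB_herm hJ.isHermitian)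
      refine ⟨_, (c : ℂ) • 1, (psd_smul_one hc).isHermitian, rfl, (c : ℂ) • 1, h1, h2, ?_, ?_⟩
      · rw [hk, ptB_smul_one]
        exact h0 c hc
      · rw [hk, ptB_smul_one, sub_self]
        exact Matrix.PosSemidef.zero
    · rintro x ⟨S, hS, rfl, R, h⟩
      refine ⟨S, hS, rfl, J, R, ?_, h⟩
      rw [sub_self]
      exact Matrix.PosSemidef.zero
  · apply csInf_le_csInf hbdd
    · obtain ⟨c, hc, h1, h2⟩ := aux_bound J hJ.isHermitian
      refine ⟨_, (c : ℂ) • 1, (psd_smul_one hc).isHermitian, rfl, (c : ℂ) • 1, h2, ?_, ?_⟩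
      · rw [hk, ptB_smul_one]
        exact h0 c hc
      · rw [hk, ptB_smul_one, sub_self]
        exact Matrix.PosSemidef.zero
    · rintro x ⟨S, hS, rfl, K, h1, h2, h3⟩
      refine ⟨Sᵀ, hS.transpose, by rw [Matrix.trace_transpose], K,
        (1 : Matrix A A ℂ) ⊗ₖ S, h1, h2, h3, ?_, ?_⟩
      · rw [ptB_kron]
        have h := (half_psd h2 h3).transpose
        have e : ((1 : Matrix A A ℂ) ⊗ₖ S)ᵀ = (1 : Matrix A A ℂ) ⊗ₖ Sᵀ := by
          rw [← Matrix.kroneckerMap_transpose, Matrix.transpose_one]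
        rw [e] at h
        exact h.add h
      · rw [ptB_kron, sub_self]
        exact Matrix.PosSemidef.zero
end

section
/- Let A and B be finite types and let J be a positive semidefinite matrix indexed by (A×B)×(A×B). Then inf{ λ_max(tr_B Y) : Y ∈ SEPcone(A:B) and Y − J is positive semidefinite } = inf{ t ∈ ℝ : t > 0 and there exists W ∈ SEPcone(A:B) with I_A − tr_B W positive semidefinite and t·W − J positive semidefinite }. (This is the reformulation showing that the max-relative entropy of entanglement of a channel equals its Sigma-information E_max = E_{max,Σ}, at the level of Choi matrices.) -/
open Matrix Kronecker ComplexOrder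

theorem psd_iff_eig {n : Type*} [Fintype n] [DecidableEq n] (M : Matrix n n ℂ)
    (hM : M.IsHermitian) (t : ℝ) :
    (t • (1 : Matrix n n ℂ) - M).PosSemidef ↔ ∀ i, hM.eigenvalues i ≤ t := by
  open scoped MatrixOrder in
  have h := le_algebraMap_iff_spectrum_le (R := ℝ) (r := t) (a := M) hM
  rw [Matrix.le_iff, Algebra.algebraMap_eq_smul_one,
    hM.spectrum_real_eq_range_eigenvalues, Set.forall_mem_range] at h
  exact h

theorem SEPcone_smul {A B : Type*} [Fintype A] [Fintype B] {Y : Matrix (A × B) (A × B) ℂ}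
    (hY : Y ∈ SEPcone A B) {c : ℝ} (hc : 0 ≤ c) : c • Y ∈ SEPcone A B := by
  obtain ⟨k, P, Q, hP, hQ, rfl⟩ := hY
  refine ⟨k, fun i => c • P i, Q, fun i => (hP i).smul hc, hQ, ?_⟩
  simp only [Finset.smul_sum, Matrix.smul_kronecker]

theorem ptrB_smul {A B : Type*} [Fintype B] (Y : Matrix (A × B) (A × B) ℂ) (c : ℝ) :
    ptrB (c • Y) = c • ptrB Y := by
  ext a a'
  simp [ptrB, Finset.mul_sum]

theorem ptrB_posSemidef {A B : Type*} [Fintype A] [Fintype B] {Y : Matrix (A × B) (A × B) ℂ}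
    (hY : Y ∈ SEPcone A B) : (ptrB Y).PosSemidef := by
  obtain ⟨k, P, Q, hP, hQ, rfl⟩ := hY
  have h : ptrB (∑ i, P i ⊗ₖ Q i) = ∑ i, (Q i).trace • P i := by
    ext a a'
    simp only [ptrB, Matrix.of_apply, Matrix.sum_apply, Matrix.smul_apply, Matrix.trace,
      Matrix.diag_apply, Matrix.kronecker_apply, smul_eq_mul, Finset.sum_mul]
    rw [Finset.sum_comm]
    exact Finset.sum_congr rfl fun i _ => Finset.sum_congr rfl fun b _ => mul_comm _ _
  rw [h]
  exact Matrix.posSemidef_sum _ fun i _ => (hP i).smul (hQ i).trace_nonneg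

theorem lamMax_nonneg {n : Type*} [Fintype n] [DecidableEq n] {M : Matrix n n ℂ}
    (hM : M.PosSemidef) : 0 ≤ lamMax M := by
  rw [lamMax, dif_pos hM.1]
  exact Real.iSup_nonneg fun i => hM.eigenvalues_nonneg i

theorem lamMax_le {n : Type*} [Fintype n] [DecidableEq n] {M : Matrix n n ℂ}
    (hM : M.PosSemidef) {t : ℝ} (ht : 0 ≤ t) :
    lamMax M ≤ t ↔ (t • (1 : Matrix n n ℂ) - M).PosSemidef := by
  rw [lamMax, dif_pos hM.1, psd_iff_eig M hM.1]
  exact ⟨fun h i => (le_ciSup (Set.finite_range _).bddAbove i).trans h,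
    fun h => Real.iSup_le h ht⟩

/-- the SDP reformulation showing `E_max = E_{max,Σ}` at the level of
Choi matrices. -/
theorem emax_eq_sigma {A B : Type*} [Fintype A] [DecidableEq A] [Fintype B]
    (J : Matrix (A × B) (A × B) ℂ) (hJ : J.PosSemidef) :
    sInf {x : ℝ | ∃ Y ∈ SEPcone A B, (Y - J).PosSemidef ∧ x = lamMax (ptrB Y)} =
      sInf {t : ℝ | 0 < t ∧ ∃ W ∈ SEPcone A B,
        ((1 : Matrix A A ℂ) - ptrB W).PosSemidef ∧ (t • W - J).PosSemidef} := by
  have hS : ∀ x ∈ {x : ℝ | ∃ Y ∈ SEPcone A B, (Y - J).PosSemidef ∧ x = lamMax (ptrB Y)},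
      ∀ ε > 0, x + ε ∈ {t : ℝ | 0 < t ∧ ∃ W ∈ SEPcone A B,
        ((1 : Matrix A A ℂ) - ptrB W).PosSemidef ∧ (t • W - J).PosSemidef} := by
    rintro x ⟨Y, hY, hYJ, rfl⟩ ε hε
    have hp := ptrB_posSemidef hY
    have h0 := lamMax_nonneg hp
    set t := lamMax (ptrB Y) + ε with htdef
    have ht : 0 < t := by linarith
    have h1 := (lamMax_le hp ht.le).1 (by linarith)
    refine ⟨ht, t⁻¹ • Y, SEPcone_smul hY (inv_nonneg.2 ht.le), ?_, ?_⟩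
    · have h2 := h1.smul (inv_nonneg.2 ht.le)
      rwa [smul_sub, smul_smul, inv_mul_cancel₀ ht.ne', one_smul, ← ptrB_smul] at h2
    · rwa [smul_smul, mul_inv_cancel₀ ht.ne', one_smul]
  have hT : ∀ t ∈ {t : ℝ | 0 < t ∧ ∃ W ∈ SEPcone A B,
        ((1 : Matrix A A ℂ) - ptrB W).PosSemidef ∧ (t • W - J).PosSemidef},
      ∃ x ∈ {x : ℝ | ∃ Y ∈ SEPcone A B, (Y - J).PosSemidef ∧ x = lamMax (ptrB Y)}, x ≤ t := by
    rintro t ⟨ht, W, hW, h1, h2⟩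
    have hY := SEPcone_smul hW ht.le
    refine ⟨_, ⟨t • W, hY, h2, rfl⟩, (lamMax_le (ptrB_posSemidef hY) ht.le).2 ?_⟩
    rw [ptrB_smul, ← smul_sub]
    exact h1.smul ht.le
  have hS0 : BddBelow {x : ℝ | ∃ Y ∈ SEPcone A B, (Y - J).PosSemidef ∧ x = lamMax (ptrB Y)} := by
    refine ⟨0, ?_⟩
    rintro x ⟨Y, hY, -, rfl⟩
    exact lamMax_nonneg (ptrB_posSemidef hY)
  have hT0 : BddBelow {t : ℝ | 0 < t ∧ ∃ W ∈ SEPcone A B,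
        ((1 : Matrix A A ℂ) - ptrB W).PosSemidef ∧ (t • W - J).PosSemidef} :=
    ⟨0, fun t ht => ht.1.le⟩
  generalize {x : ℝ | ∃ Y ∈ SEPcone A B, (Y - J).PosSemidef ∧ x = lamMax (ptrB Y)} = S at *
  generalize {t : ℝ | 0 < t ∧ ∃ W ∈ SEPcone A B,
        ((1 : Matrix A A ℂ) - ptrB W).PosSemidef ∧ (t • W - J).PosSemidef} = T at *
  rcases S.eq_empty_or_nonempty with rfl | hne
  · have : T = ∅ := by
      rw [Set.eq_empty_iff_forall_notMem]
      intro t ht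
      obtain ⟨x, hx, -⟩ := hT t ht
      exact hx
    rw [this]
  · have hTne : T.Nonempty := ⟨_, hS _ hne.some_mem 1 one_pos⟩
    apply le_antisymm
    · refine le_csInf hTne fun t ht => ?_
      obtain ⟨x, hx, hxt⟩ := hT t ht
      exact (csInf_le hS0 hx).trans hxt
    · refine le_csInf hne fun x hx => ?_
      exact le_of_forall_pos_le_add fun ε hε => csInf_le hT0 (hS x hx ε hε)
end

section
/- Let A′, A, B, B′ be finite types. Let σ be a matrix indexed by ((A′×A)×B′)×((A′×A)×B′) belonging to SEPcone((A′×A):B′), and let J be a matrix indexed by (A×B)×(A×B) belonging to SEPcone(A:B). Define the matrix γ, indexed by (A′×(B×B′))×(A′×(B×B′)), by γ((a′,(b,c)),(a′₁,(b₁,c₁))) := ∑_{a,a₁} σ(((a′,a),c),((a′₁,a₁),c₁)) · J((a,b),(a₁,b₁)) (the result of applying the completely positive map with Choi matrix J to the A-subsystem of σ). Then γ ∈ SEPcone(A′:(B×B′)). (This says that an entanglement-breaking subchannel applied to a state separable across A′A:B′ produces an operator separable across A′:BB′, the key step in the amortization inequality for the geometric Rényi relative entropy of entanglement.) -/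
open Matrix Kronecker ComplexOrder

/-- Contracting the `A`-subsystem of a PSD matrix with a PSD matrix keeps it PSD. -/
theorem contract_posSemidef {A' A : Type*} [Fintype A'] [Fintype A]
    {P : Matrix (A' × A) (A' × A) ℂ} (hP : P.PosSemidef)
    {R : Matrix A A ℂ} (hR : R.PosSemidef) :
    (Matrix.of fun x y : A' => ∑ a, ∑ a₁, P (x, a) (y, a₁) * R a a₁).PosSemidef := by
  classical
  have h1 := (hP.kronecker hR).submatrix (fun p : A' × A => (p, p.2))
  have h2 := h1.conjTranspose_mul_mul_same
    (Matrix.of fun (p : A' × A) (y : A') => if p.1 = y then (1 : ℂ) else 0)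
  refine (congrArg Matrix.PosSemidef ?_).mpr h2
  ext x y
  simp only [Matrix.of_apply, Matrix.mul_apply, Matrix.conjTranspose_apply,
    Matrix.submatrix_apply, Matrix.kroneckerMap_apply, Fintype.sum_prod_type]
  simp [apply_ite, ite_mul, mul_ite, Finset.sum_ite_irrel]
  rw [Finset.sum_comm]

/-- applying an entanglement-breaking subchannel (separable Choi matrix `J`)
to the `A`-subsystem of an operator separable across `A′A : B′` yields an operator
separable across `A′ : BB′`. -/
theorem eb_channel_preserves_separability {A' A B B' : Type*}
    [Fintype A'] [Fintype A] [Fintype B] [Fintype B']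
    (σ : Matrix ((A' × A) × B') ((A' × A) × B') ℂ) (hσ : σ ∈ SEPcone (A' × A) B')
    (J : Matrix (A × B) (A × B) ℂ) (hJ : J ∈ SEPcone A B) :
    (Matrix.of fun (x y : A' × (B × B')) =>
        ∑ a, ∑ a₁, σ ((x.1, a), x.2.2) ((y.1, a₁), y.2.2) * J (a, x.2.1) (a₁, y.2.1)) ∈
      SEPcone A' (B × B') := by
  obtain ⟨k, P, Q, hP, hQ, rfl⟩ := hσ
  obtain ⟨l, R, S, hR, hS, rfl⟩ := hJ
  refine ⟨k * l,
    fun n => Matrix.of fun x y : A' => ∑ a, ∑ a₁,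
      P (finProdFinEquiv.symm n).1 (x, a) (y, a₁) * R (finProdFinEquiv.symm n).2 a a₁,
    fun n => S (finProdFinEquiv.symm n).2 ⊗ₖ Q (finProdFinEquiv.symm n).1,
    fun n => contract_posSemidef (hP _) (hR _), fun n => (hS _).kronecker (hQ _), ?_⟩
  rw [Equiv.sum_comp finProdFinEquiv.symm (fun p : Fin k × Fin l =>
    (Matrix.of fun x y : A' => ∑ a, ∑ a₁, P p.1 (x, a) (y, a₁) * R p.2 a a₁) ⊗ₖ
      (S p.2 ⊗ₖ Q p.1))]
  ext x y
  simp only [Matrix.of_apply, Matrix.sum_apply, Matrix.kroneckerMap_apply, Finset.sum_mul]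
  have h : ∀ a a₁ : A,
      (∑ i, P i (x.1, a) (y.1, a₁) * Q i x.2.2 y.2.2 * ∑ j, R j a a₁ * S j x.2.1 y.2.1) =
      ∑ p : Fin k × Fin l, P p.1 (x.1, a) (y.1, a₁) * R p.2 a a₁ *
        (S p.2 x.2.1 y.2.1 * Q p.1 x.2.2 y.2.2) := by
    intro a a₁
    rw [Fintype.sum_prod_type]
    refine Finset.sum_congr rfl fun i _ => ?_
    rw [Finset.mul_sum]
    exact Finset.sum_congr rfl fun j _ => by ring
  simp only [h]
  rw [Finset.sum_comm]
  rw [Finset.sum_comm' (s := Finset.univ) (t := fun _ => Finset.univ) (t' := Finset.univ)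
    (s' := fun _ => Finset.univ) (by simp)]
  calc _ = ∑ a : A, ∑ p : Fin k × Fin l, ∑ a₁ : A, P p.1 (x.1, a) (y.1, a₁) * R p.2 a a₁ *
        (S p.2 x.2.1 y.2.1 * Q p.1 x.2.2 y.2.2) :=
        Finset.sum_congr rfl fun a _ => Finset.sum_comm
    _ = _ := Finset.sum_comm
end
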